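/- Suppose |d|_p = 1/p (the ramified case), and let β : ℕ → ℝ be determined by β(0) = 1, β(1) = (λ−1)/q, and q·β(k+2) − λ·β(k+1) + β(k) = 0 for all k. Then there exists s₀ ∈ ℝ such that for every real s > s₀ the function f_s is integrable on V_d(ℤ_p) and ∫_{V_d(ℤ_p)} f_s = (1/2)·(1−q⁻¹)·(1−q⁻²)³·q^{1−s}·(1−q^{1−2s})⁻¹·(1−(q⁻¹λ²−1)·q^{1−2s}+(q⁻¹λ²−1)·q^{2−4s}−q^{3−6s})⁻¹·(1 + q^{1−2s}). -/

import Mathlib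

open Matrix MeasureTheory

noncomputable instance (p : ℕ) [Fact p.Prime] : MeasurableSpace ℚ_[p] := borel _
instance (p : ℕ) [Fact p.Prime] : BorelSpace ℚ_[p] := ⟨rfl⟩
noncomputable instance (p : ℕ) [Fact p.Prime] :
    MeasurableSpace (Matrix (Fin 2) (Fin 2) ℚ_[p]) :=
  inferInstanceAs (MeasurableSpace (Fin 2 → Fin 2 → ℚ_[p]))

/-- `V = M₂(ℚ_p) × M₂(ℚ_p)`. -/
abbrev VV (p : ℕ) [Fact p.Prime] :=
  Matrix (Fin 2) (Fin 2) ℚ_[p] × Matrix (Fin 2) (Fin 2) ℚ_[p]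

/-- `P(x,y) = −det(x·y^ι − y·x^ι)`, where `m^ι` is the adjugate. -/
noncomputable def Pq {p : ℕ} [Fact p.Prime] (v : VV p) : ℚ_[p] :=
  - (v.1 * v.2.adjugate - v.2 * v.1.adjugate).det

/-- The equivariant map `F₁ : V → ℚ_p³`. -/
noncomputable def Fmap1 {p : ℕ} [Fact p.Prime] (v : VV p) : ℚ_[p] × ℚ_[p] × ℚ_[p] :=
  (v.1 0 0 * v.2 0 1 - v.1 0 1 * v.2 0 0,
   (v.1 0 0 * v.2 1 1 - v.1 0 1 * v.2 1 0) + (v.1 1 0 * v.2 0 1 - v.1 1 1 * v.2 0 0),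
   v.1 1 0 * v.2 1 1 - v.1 1 1 * v.2 1 0)

/-- The equivariant map `F₂ : V → ℚ_p³`. -/
noncomputable def Fmap2 {p : ℕ} [Fact p.Prime] (v : VV p) : ℚ_[p] × ℚ_[p] × ℚ_[p] :=
  (v.1 0 0 * v.2 1 0 - v.2 0 0 * v.1 1 0,
   (v.1 0 0 * v.2 1 1 - v.2 0 1 * v.1 1 0) + (v.1 0 1 * v.2 1 0 - v.2 0 0 * v.1 1 1),
   v.1 0 1 * v.2 1 1 - v.2 0 1 * v.1 1 1)

/-- The maximum of the `p`-adic absolute values of the three coordinates. -/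
noncomputable def mcoord {p : ℕ} [Fact p.Prime] (t : ℚ_[p] × ℚ_[p] × ℚ_[p]) : ℝ :=
  max (max ‖t.1‖ ‖t.2.1‖) ‖t.2.2‖

/-- `V_d(ℤ_p)`: integral pairs whose invariant `P` lies in `d·(ℚ_pˣ)²`. -/
def Vd (p : ℕ) [Fact p.Prime] (d : ℤ_[p]) : Set (VV p) :=
  {v | (∀ i j, ‖v.1 i j‖ ≤ 1) ∧ (∀ i j, ‖v.2 i j‖ ≤ 1) ∧
    ∃ c : ℚ_[p], c ≠ 0 ∧ Pq v = (d : ℚ_[p]) * c ^ 2}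

open Classical in
/-- The integrand `f_s`. -/
noncomputable def fs (p : ℕ) [Fact p.Prime] (d : ℤ_[p]) (β : ℕ → ℝ) (s : ℝ)
    (v : VV p) : ℝ :=
  if h : Pq v ≠ 0 ∧
      (∃ l : ℕ, ‖(d : ℚ_[p])‖ * mcoord (Fmap1 v) ^ 2 = ‖Pq v‖ * (p : ℝ) ^ (2 * l)) ∧
      (∃ l : ℕ, ‖(d : ℚ_[p])‖ * mcoord (Fmap2 v) ^ 2 = ‖Pq v‖ * (p : ℝ) ^ (2 * l)) then
    β h.2.1.choose * β h.2.2.choose * ‖Pq v‖ ^ (s - 2)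
  else 0

/-!
`P(v)` is the discriminant of both binary quadratic forms `F₁(v)` and `F₂(v)`. Swapping the rows of
both matrices exchanges the outer coefficients of `F₁`, and transposing both matrices exchanges `F₁`
and `F₂`, so the integral reduces to the region where the leading coefficient of `F₁` dominates
`F₁` and `F₂`. There, after regrouping the rows, the pair is `(A, A N)` with `A` and `N` integral,
`F₁` is `det A` times the form with coefficients `1, tr N, det N`, and `F₂` is `det A` times a form
whose coefficients are independent coordinates of `N`. The integral factors into the zeta integral
of `|det A|^(2 s - 2)` over `M₂(ℤ_p)` and an integral over quadratic forms that depends only on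
content and discriminant.

When `|d| = 1 / p` the discriminant has odd valuation, and a form of content `p^(-c)` contributes
the levels `(c + l, l)`. Write `β n = (S n - S (n - 1)) / p ^ n`, where
`S (n + 2) = λ S (n + 1) - p S n`. Summing over `c` first turns the double series over `(c, l)` into
a telescoping one, because `(S n - S (n - 1)) (S n + S (n - 1)) = S n ^ 2 - S (n - 1) ^ 2`. What
remains is `(1 - Q) ∑ S n ^ 2 Q ^ n` with `Q = p ^ (-2 s)`; the factor `1 - Q` cancels against the
denominator of the zeta integral of the determinant, and `∑ S n ^ 2 Q ^ n` is rational in `Q`.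
-/

namespace MatrixPair

open Metric Set
open scoped ENNReal NNReal Pointwise

variable {p : ℕ} [Fact p.Prime]

theorem prime_cast_pos : (0 : ℝ) < p := mod_cast (Fact.out : p.Prime).pos

theorem one_lt_prime_cast : (1 : ℝ) < p := mod_cast (Fact.out : p.Prime).one_lt

theorem inv_prime_lt_one : (p : ℝ)⁻¹ < 1 := inv_lt_one_of_one_lt₀ one_lt_prime_cast

theorem padicCast_prime_ne_zero : (p : ℚ_[p]) ≠ 0 := mod_cast (Fact.out : p.Prime).ne_zero

theorem norm_lt_one_iff_norm_le_inv (x : ℚ_[p]) : ‖x‖ < 1 ↔ ‖x‖ ≤ (p : ℝ)⁻¹ := by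
  simpa using (Padic.norm_le_pow_iff_norm_lt_pow_add_one x (-1)).symm

/-! ### Haar measure on `ℚ_p` -/

/-- The closed unit ball `ℤ_p`, as a compact set with nonempty interior. -/
noncomputable def unitBall (p : ℕ) [Fact p.Prime] : TopologicalSpace.PositiveCompacts ℚ_[p] where
  carrier := closedBall 0 1
  isCompact' := isCompact_closedBall _ _
  interior_nonempty' :=
    ⟨0, interior_mono ball_subset_closedBall (by simp [isOpen_ball.interior_eq])⟩

noncomputable instance (p : ℕ) [Fact p.Prime] : MeasureSpace ℚ_[p] where
  volume := Measure.addHaarMeasure (unitBall p)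

instance (p : ℕ) [Fact p.Prime] : (volume : Measure ℚ_[p]).IsAddHaarMeasure :=
  inferInstanceAs (Measure.addHaarMeasure (unitBall p)).IsAddHaarMeasure

theorem volume_closedBall_one : volume (closedBall (0 : ℚ_[p]) 1) = 1 :=
  Measure.addHaarMeasure_self (K₀ := unitBall p)

theorem closedBall_one_eq_iUnion : closedBall (0 : ℚ_[p]) 1 =
    ⋃ i ∈ Finset.range p, closedBall ((i : ℕ) : ℚ_[p]) (p : ℝ)⁻¹ := by
  ext x
  simp only [mem_closedBall, dist_eq_norm, sub_zero, mem_iUnion, Finset.mem_range, exists_prop]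
  constructor
  · intro hx
    obtain ⟨n, hn, h⟩ := PadicInt.exists_mem_range (p := p) ⟨x, hx⟩
    rw [PadicInt.maximalIdeal_eq_span_p, Ideal.mem_span_singleton,
      ← PadicInt.norm_lt_one_iff_dvd] at h
    exact ⟨n, hn, (norm_lt_one_iff_norm_le_inv _).1 h⟩
  · rintro ⟨i, -, h⟩
    have hi : ‖((i : ℕ) : ℚ_[p])‖ ≤ 1 := mod_cast Padic.norm_int_le_one (p := p) (i : ℤ)
    have hx := Padic.nonarchimedean (x - (i : ℚ_[p])) i
    simpa using hx.trans (max_le (h.trans inv_prime_lt_one.le) hi)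

theorem pairwiseDisjoint_closedBall_natCast :
    (Finset.range p : Set ℕ).PairwiseDisjoint
      fun i => closedBall ((i : ℕ) : ℚ_[p]) (p : ℝ)⁻¹ := by
  intro i hi j hj hij
  refine (IsUltrametricDist.closedBall_eq_or_disjoint _ _ _).resolve_left fun h => hij ?_
  have hmem : (i : ℚ_[p]) ∈ closedBall (j : ℚ_[p]) (p : ℝ)⁻¹ :=
    h ▸ mem_closedBall_self (inv_nonneg.2 prime_cast_pos.le)
  rw [mem_closedBall, dist_eq_norm, ← norm_lt_one_iff_norm_le_inv] at hmem
  have hdvd : ‖(((i : ℤ) - (j : ℤ) : ℤ) : ℚ_[p])‖ < 1 := by exact_mod_cast hmem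
  rw [Padic.norm_intCast_lt_one_iff, ← Int.modEq_iff_dvd, Int.natCast_modEq_iff] at hdvd
  rw [Finset.coe_range, mem_Iio] at hi hj
  exact (hdvd.eq_of_lt_of_lt hj hi).symm

theorem volume_closedBall_inv_prime :
    volume (closedBall (0 : ℚ_[p]) (p : ℝ)⁻¹) = (p : ℝ≥0∞)⁻¹ := by
  have h := volume_closedBall_one (p := p)
  rw [closedBall_one_eq_iUnion, measure_biUnion_finset pairwiseDisjoint_closedBall_natCast
    fun i _ => measurableSet_closedBall] at h
  simp only [Measure.addHaar_closedBall_center, Finset.sum_const, Finset.card_range,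
    nsmul_eq_mul] at h
  exact ENNReal.eq_inv_of_mul_eq_one_left ((mul_comm _ _).trans h)

theorem distribHaarChar_smul_map {G A : Type*} [Group G] [AddCommGroup A] [DistribMulAction G A]
    [TopologicalSpace A] [IsTopologicalAddGroup A] [LocallyCompactSpace A]
    [ContinuousConstSMul G A] [MeasurableSpace A] [BorelSpace A]
    (μ : Measure A) [μ.IsAddHaarMeasure] [μ.Regular] (g : G) :
    (distribHaarChar A g : ℝ≥0∞) • μ.map (g • ·) = μ := by
  ext s hs
  rw [Measure.smul_apply, Measure.map_apply (continuous_const_smul g).measurable hs,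
    preimage_smul, smul_eq_mul, distribHaarChar_mul, smul_inv_smul]

theorem distribHaarChar_eq_of_volume_closedBall {u : ℚ_[p]ˣ} {r : ℝ≥0}
    (h : volume (closedBall (0 : ℚ_[p]) ‖(u : ℚ_[p])‖) = r) : distribHaarChar ℚ_[p] u = r := by
  refine distribHaarChar_eq_of_measure_smul_eq_mul (μ := volume) (s := closedBall 0 1)
    (by simp [volume_closedBall_one]) (by simp [volume_closedBall_one]) ?_
  rw [Units.smul_def, smul_closedBall' u.ne_zero, smul_zero, mul_one, h, volume_closedBall_one,
    mul_one]

theorem distribHaarChar_padic (u : ℚ_[p]ˣ) : distribHaarChar ℚ_[p] u = ‖(u : ℚ_[p])‖₊ := by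
  set π : ℚ_[p]ˣ := Units.mk0 p padicCast_prime_ne_zero
  have hπ : distribHaarChar ℚ_[p] π = ‖(π : ℚ_[p])‖₊ := by
    have hnorm : ‖(π : ℚ_[p])‖₊ = (p : ℝ≥0)⁻¹ := NNReal.eq (by simp [π])
    refine distribHaarChar_eq_of_volume_closedBall ?_
    rw [← coe_nnnorm, hnorm, NNReal.coe_inv, NNReal.coe_natCast, volume_closedBall_inv_prime,
      ENNReal.coe_inv (mod_cast (Fact.out : p.Prime).ne_zero), ENNReal.coe_natCast]
  obtain ⟨n, hn⟩ : ∃ n : ℤ, ‖(u : ℚ_[p])‖ = ‖(π : ℚ_[p])‖ ^ n :=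
    ⟨_, by simpa [π] using Padic.norm_eq_zpow_neg_valuation u.ne_zero⟩
  have hunit : distribHaarChar ℚ_[p] (u * (π ^ n)⁻¹) = 1 := by
    refine distribHaarChar_eq_of_volume_closedBall ?_
    have : ‖((u * (π ^ n)⁻¹ : ℚ_[p]ˣ) : ℚ_[p])‖ = 1 := by
      simp only [Units.val_mul, Units.val_inv_eq_inv_val, Units.val_zpow_eq_zpow_val, norm_mul,
        norm_inv, norm_zpow, hn]
      exact mul_inv_cancel₀ (zpow_ne_zero _ (norm_ne_zero_iff.2 π.ne_zero))
    rw [this, volume_closedBall_one, ENNReal.coe_one]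
  rw [map_mul, map_inv, map_zpow, hπ, mul_inv_eq_one₀ (zpow_ne_zero _ (by simp))] at hunit
  rw [hunit]
  exact NNReal.eq hn.symm

theorem map_mul_left_volume {a : ℚ_[p]} (ha : a ≠ 0) :
    Measure.map (a * ·) (volume : Measure ℚ_[p]) = ENNReal.ofReal ‖a‖⁻¹ • volume := by
  have h := distribHaarChar_smul_map (volume : Measure ℚ_[p]) (Units.mk0 a ha)
  rw [distribHaarChar_padic, Units.val_mk0] at h
  conv_rhs => rw [← h]
  rw [smul_smul, ENNReal.ofReal_inv_of_pos (norm_pos_iff.2 ha), ofReal_norm, enorm_eq_nnnorm,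
    ENNReal.inv_mul_cancel (by simpa using ha) ENNReal.coe_ne_top, one_smul]
  rfl

theorem measurePreserving_of_measure_preimage_eq {G H : Type*}
    [AddGroup G] [TopologicalSpace G] [IsTopologicalAddGroup G] [MeasurableSpace G] [BorelSpace G]
    [AddGroup H] [TopologicalSpace H] [IsTopologicalAddGroup H] [MeasurableSpace H] [BorelSpace H]
    [LocallyCompactSpace H] [SecondCountableTopology H]
    {μ : Measure G} [μ.IsAddHaarMeasure] {ν : Measure H} [ν.IsAddHaarMeasure] (e : G ≃ₜ+ H)
    {K : Set H} (hK : MeasurableSet K) (h0 : ν K ≠ 0) (htop : ν K ≠ ∞) (h : μ (e ⁻¹' K) = ν K) :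
    MeasurePreserving e μ ν := by
  have hmeas : Measurable e := e.toHomeomorph.measurable
  have : (μ.map e).IsAddHaarMeasure := e.isAddHaarMeasure_map μ
  refine ⟨hmeas, ?_⟩
  have hsmul := Measure.isAddLeftInvariant_eq_smul (μ.map e) ν
  rw [← Measure.map_apply hmeas hK, hsmul, Measure.smul_apply, ENNReal.smul_def, smul_eq_mul,
    ENNReal.mul_eq_right h0 htop] at h
  rw [hsmul, ENNReal.smul_def, h, one_smul]

theorem mem_closedBall_affine_iff {t u x : ℚ_[p]} (ht : ‖t‖ ≤ 1) (hu : ‖u‖ = 1) :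
    t + u * x ∈ closedBall 0 1 ↔ x ∈ closedBall 0 1 := by
  have hball : closedBall (0 : ℚ_[p]) 1 = closedBall t 1 :=
    (IsUltrametricDist.closedBall_eq_of_mem (by simpa using ht)).symm
  simp only [hball, mem_closedBall_iff_norm, add_sub_cancel_left, norm_mul, hu, one_mul]
  rw [← mem_closedBall_zero_iff, hball, mem_closedBall_iff_norm]

theorem measurePreserving_affine (t : ℚ_[p]) {u : ℚ_[p]} (hu : ‖u‖ = 1) :
    MeasurePreserving (fun x : ℚ_[p] => t + u * x) := by
  have hu0 : u ≠ 0 := norm_ne_zero_iff.1 (by simp [hu])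
  refine (measurePreserving_add_left volume t).comp ⟨measurable_const_mul u, ?_⟩
  simp [map_mul_left_volume hu0, hu]

theorem setLIntegral_closedBall_affine {t u : ℚ_[p]} (ht : ‖t‖ ≤ 1) (hu : ‖u‖ = 1)
    {f : ℚ_[p] → ℝ≥0∞} (hf : Measurable f) :
    ∫⁻ x in closedBall 0 1, f (t + u * x) = ∫⁻ x in closedBall 0 1, f x := by
  rw [← (measurePreserving_affine t hu).setLIntegral_comp_preimage measurableSet_closedBall hf]
  congr 3
  ext x
  exact (mem_closedBall_affine_iff ht hu).symm

theorem ball_one_eq_closedBall_inv {E : Type*} [NormedAddCommGroup E]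
    (hE : ∀ x : E, ∃ a : ℚ_[p], ‖a‖ = ‖x‖) :
    ball (0 : E) 1 = closedBall 0 (p : ℝ)⁻¹ := by
  ext x
  obtain ⟨a, ha⟩ := hE x
  simp [← ha, norm_lt_one_iff_norm_le_inv]

theorem volume_ball_one : volume (ball (0 : ℚ_[p]) 1) = (p : ℝ≥0∞)⁻¹ := by
  rw [ball_one_eq_closedBall_inv fun x => ⟨x, rfl⟩, volume_closedBall_inv_prime]

/-! ### Decomposition by content -/

theorem closedBall_one_diff_zero {E : Type*} [NormedAddCommGroup E]
    (hE : ∀ x : E, ∃ a : ℚ_[p], ‖a‖ = ‖x‖) :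
    closedBall (0 : E) 1 \ {0} = ⋃ c : ℕ, sphere 0 ((p : ℝ)⁻¹ ^ c) := by
  ext x
  simp only [mem_sdiff, mem_closedBall_zero_iff, mem_singleton_iff, mem_iUnion,
    mem_sphere_zero_iff_norm]
  constructor
  · rintro ⟨hx, h0⟩
    obtain ⟨a, ha⟩ := hE x
    obtain ⟨z, rfl⟩ : ∃ z : ℤ_[p], (z : ℚ_[p]) = a := ⟨⟨a, ha.trans_le hx⟩, rfl⟩
    have hz : z ≠ 0 := by
      rintro rfl
      exact h0 (norm_eq_zero.1 (by simpa using ha.symm))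
    refine ⟨z.valuation, ?_⟩
    rw [← ha, ← PadicInt.norm_def, PadicInt.norm_eq_zpow_neg_valuation hz, inv_pow, _root_.zpow_neg,
      zpow_natCast]
  · rintro ⟨c, hc⟩
    refine ⟨hc.trans_le (pow_le_one₀ (inv_nonneg.2 prime_cast_pos.le) inv_prime_lt_one.le), ?_⟩
    rintro rfl
    exact pow_ne_zero c (inv_ne_zero prime_cast_pos.ne') (hc.symm.trans norm_zero)

theorem ofReal_inv_prime_pow (n : ℕ) : ENNReal.ofReal ((p : ℝ)⁻¹ ^ n) = (p : ℝ≥0∞)⁻¹ ^ n := by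
  rw [ENNReal.ofReal_pow (inv_nonneg.2 prime_cast_pos.le),
    ENNReal.ofReal_inv_of_pos prime_cast_pos, ENNReal.ofReal_natCast]

theorem measure_sphere_one {E : Type*} [NormedAddCommGroup E] [MeasurableSpace E] [BorelSpace E]
    [ProperSpace E] {ν : Measure E} [ν.IsAddHaarMeasure] {n : ℕ}
    (hE : ∀ x : E, ∃ a : ℚ_[p], ‖a‖ = ‖x‖)
    (hν : ν (closedBall 0 (p : ℝ)⁻¹) = (p : ℝ≥0∞)⁻¹ ^ n * ν (closedBall 0 1)) :
    ν (sphere (0 : E) 1) = ENNReal.ofReal (1 - (p : ℝ)⁻¹ ^ n) * ν (closedBall 0 1) := by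
  rw [← closedBall_sdiff_ball, measure_sdiff ball_subset_closedBall
    measurableSet_ball.nullMeasurableSet measure_ball_lt_top.ne, ball_one_eq_closedBall_inv hE, hν,
    ENNReal.ofReal_sub _ (pow_nonneg (inv_nonneg.2 prime_cast_pos.le) n), ofReal_inv_prime_pow,
    ENNReal.ofReal_one, ENNReal.sub_mul fun _ _ => measure_closedBall_lt_top.ne, one_mul]

section Content

variable {E : Type*} [NormedAddCommGroup E] [NormedSpace ℚ_[p] E]
  [MeasurableSpace E] [BorelSpace E] [ProperSpace E] {ν : Measure E} [ν.IsAddHaarMeasure] {n : ℕ}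

theorem eq_smul_map_prime_pow_smul
    (hν : ν (closedBall 0 (p : ℝ)⁻¹) = (p : ℝ≥0∞)⁻¹ ^ n * ν (closedBall 0 1)) (c : ℕ) :
    ν = ((p : ℝ≥0∞)⁻¹ ^ n) ^ c • ν.map ((p : ℚ_[p]) ^ c • ·) := by
  set π : ℚ_[p]ˣ := Units.mk0 p padicCast_prime_ne_zero
  have hπ : distribHaarChar E π = (p : ℝ≥0)⁻¹ ^ n := by
    refine distribHaarChar_eq_of_measure_smul_eq_mul (μ := ν) (s := closedBall 0 1)
      (measure_closedBall_pos _ _ one_pos).ne' measure_closedBall_lt_top.ne ?_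
    rw [Units.smul_def, smul_closedBall' π.ne_zero, smul_zero, mul_one, Units.val_mk0,
      Padic.norm_p, hν, ENNReal.coe_pow, ENNReal.coe_inv (mod_cast (Fact.out : p.Prime).ne_zero),
      ENNReal.coe_natCast]
  have h := distribHaarChar_smul_map ν (π ^ c)
  rw [map_pow, hπ, ENNReal.coe_pow, ENNReal.coe_pow,
    ENNReal.coe_inv (mod_cast (Fact.out : p.Prime).ne_zero), ENNReal.coe_natCast] at h
  exact h.symm

theorem setLIntegral_sphere_prime_pow
    (hν : ν (closedBall 0 (p : ℝ)⁻¹) = (p : ℝ≥0∞)⁻¹ ^ n * ν (closedBall 0 1))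
    {f : E → ℝ≥0∞} (hf : Measurable f) (c : ℕ) :
    ∫⁻ x in sphere 0 ((p : ℝ)⁻¹ ^ c), f x ∂ν =
      ((p : ℝ≥0∞)⁻¹ ^ n) ^ c * ∫⁻ x in sphere 0 1, f ((p : ℚ_[p]) ^ c • x) ∂ν := by
  have hcont : Continuous ((p : ℚ_[p]) ^ c • · : E → E) := continuous_const_smul _
  have hpos : 0 < (p : ℝ)⁻¹ ^ c := pow_pos (inv_pos.2 prime_cast_pos) c
  have hpre : ((p : ℚ_[p]) ^ c • · : E → E) ⁻¹' sphere 0 ((p : ℝ)⁻¹ ^ c) = sphere 0 1 := by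
    ext x
    simp only [mem_preimage, mem_sphere_zero_iff_norm, norm_smul, norm_pow, Padic.norm_p]
    exact mul_eq_left₀ hpos.ne'
  conv_lhs => rw [eq_smul_map_prime_pow_smul hν c, Measure.restrict_smul, lintegral_smul_measure,
    setLIntegral_map isClosed_sphere.measurableSet hf hcont.measurable, hpre, smul_eq_mul]

theorem setLIntegral_closedBall_one_eq_tsum (hE : ∀ x : E, ∃ a : ℚ_[p], ‖a‖ = ‖x‖)
    (hν : ν (closedBall 0 (p : ℝ)⁻¹) = (p : ℝ≥0∞)⁻¹ ^ n * ν (closedBall 0 1))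
    {f : E → ℝ≥0∞} (hf : Measurable f) (hf0 : f 0 = 0) :
    ∫⁻ x in closedBall 0 1, f x ∂ν =
      ∑' c : ℕ, ((p : ℝ≥0∞)⁻¹ ^ n) ^ c * ∫⁻ x in sphere 0 1, f ((p : ℚ_[p]) ^ c • x) ∂ν := by
  have hdisj : Pairwise (Function.onFun Disjoint fun c : ℕ => sphere (0 : E) ((p : ℝ)⁻¹ ^ c)) :=
    fun i j hij => disjoint_left.2 fun x hi hj => hij <|
      pow_right_injective₀ (inv_pos.2 prime_cast_pos) inv_prime_lt_one.ne
        ((mem_sphere_zero_iff_norm.1 hi).symm.trans (mem_sphere_zero_iff_norm.1 hj))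
  have hzero : ∫⁻ x in closedBall (0 : E) 1 ∩ {0}, f x ∂ν = 0 :=
    setLIntegral_eq_zero (measurableSet_closedBall.inter (measurableSet_singleton 0)) <| by
      rintro x ⟨-, rfl⟩
      exact hf0
  rw [← lintegral_inter_add_sdiff f _ (measurableSet_singleton (0 : E)), hzero, zero_add,
    closedBall_one_diff_zero hE,
    lintegral_iUnion (fun c => isClosed_sphere.measurableSet) hdisj]
  exact tsum_congr (setLIntegral_sphere_prime_pow hν hf)

theorem setLIntegral_closedBall_one_of_homogeneous (hE : ∀ x : E, ∃ a : ℚ_[p], ‖a‖ = ‖x‖)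
    (hν : ν (closedBall 0 (p : ℝ)⁻¹) = (p : ℝ≥0∞)⁻¹ ^ n * ν (closedBall 0 1))
    (hν1 : ν (closedBall 0 1) = 1) {f : E → ℝ≥0∞} (hf : Measurable f) (hf0 : f 0 = 0) {r C : ℝ}
    (hr0 : 0 ≤ r) (hr1 : r < 1) (hC : 0 ≤ C)
    (hr : ∀ c : ℕ, ∀ x ∈ sphere (0 : E) 1, f ((p : ℚ_[p]) ^ c • x) = ENNReal.ofReal (r ^ c * C)) :
    ∫⁻ x in closedBall 0 1, f x ∂ν =
      ENNReal.ofReal (C * ((1 - (p : ℝ)⁻¹ ^ n) / (1 - (p : ℝ)⁻¹ ^ n * r))) := by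
  have hp0 : 0 ≤ (p : ℝ)⁻¹ ^ n := pow_nonneg (inv_nonneg.2 prime_cast_pos.le) n
  have hp1 : (p : ℝ)⁻¹ ^ n ≤ 1 := pow_le_one₀ (inv_nonneg.2 prime_cast_pos.le) inv_prime_lt_one.le
  have hterm (c : ℕ) : ((p : ℝ≥0∞)⁻¹ ^ n) ^ c * ∫⁻ x in sphere 0 1, f ((p : ℚ_[p]) ^ c • x) ∂ν =
      ENNReal.ofReal (((p : ℝ)⁻¹ ^ n * r) ^ c * (C * (1 - (p : ℝ)⁻¹ ^ n))) := by
    rw [setLIntegral_congr_fun isClosed_sphere.measurableSet (hr c), setLIntegral_const,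
      measure_sphere_one hE hν, hν1, mul_one, ← ofReal_inv_prime_pow, ← ENNReal.ofReal_pow hp0,
      ← ENNReal.ofReal_mul (mul_nonneg (pow_nonneg hr0 c) hC),
      ← ENNReal.ofReal_mul (pow_nonneg hp0 c)]
    ring_nf
  have hq0 : 0 ≤ (p : ℝ)⁻¹ ^ n * r := mul_nonneg hp0 hr0
  have hq1 : (p : ℝ)⁻¹ ^ n * r < 1 := mul_lt_one_of_nonneg_of_lt_one_right hp1 hr0 hr1
  rw [setLIntegral_closedBall_one_eq_tsum hE hν hf hf0, tsum_congr hterm,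
    ← ENNReal.ofReal_tsum_of_nonneg
      (fun c => mul_nonneg (pow_nonneg hq0 c) (mul_nonneg hC (sub_nonneg.2 hp1)))
      ((summable_geometric_of_lt_one hq0 hq1).mul_right _),
    tsum_mul_right, tsum_geometric_of_lt_one hq0 hq1]
  congr 1
  ring

end Content

theorem volume_closedBall_inv_prime_eq_pow_mul :
    volume (closedBall (0 : ℚ_[p]) (p : ℝ)⁻¹) =
      (p : ℝ≥0∞)⁻¹ ^ 1 * volume (closedBall (0 : ℚ_[p]) 1) := by
  rw [volume_closedBall_inv_prime, volume_closedBall_one, pow_one, mul_one]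

theorem volume_sphere_one :
    volume (sphere (0 : ℚ_[p]) 1) = ENNReal.ofReal (1 - (p : ℝ)⁻¹) := by
  rw [measure_sphere_one (fun x => ⟨x, rfl⟩) volume_closedBall_inv_prime_eq_pow_mul,
    volume_closedBall_one, pow_one, mul_one]

/-! ### Square classes -/

theorem norm_two (hp : Odd p) : ‖(2 : ℚ_[p])‖ = 1 := by
  simpa using (Padic.norm_natCast_eq_one_iff (p := p) (n := 2)).2 (Nat.coprime_two_right.2 hp)

theorem toZMod_eq_zero_iff (y : ℤ_[p]) : PadicInt.toZMod y = 0 ↔ ‖y‖ < 1 := by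
  rw [← RingHom.mem_ker, PadicInt.ker_toZMod, IsLocalRing.mem_maximalIdeal, PadicInt.mem_nonunits]

theorem toZMod_ne_zero_iff (y : ℤ_[p]) : PadicInt.toZMod y ≠ 0 ↔ ‖y‖ = 1 := by
  rw [Ne, toZMod_eq_zero_iff, not_lt]
  exact ⟨(PadicInt.norm_le_one y).antisymm, Eq.ge⟩

theorem isSquare_coe_padicInt_iff (y : ℤ_[p]) : IsSquare (y : ℚ_[p]) ↔ IsSquare y := by
  refine ⟨?_, fun ⟨z, hz⟩ => ⟨z, by rw [hz, PadicInt.coe_mul]⟩⟩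
  rintro ⟨c, hc⟩
  have hc1 : ‖c‖ ≤ 1 := by
    have h : ‖c‖ * ‖c‖ ≤ 1 := by
      rw [← norm_mul, ← hc]
      exact y.2
    exact abs_norm c ▸ abs_le_one_iff_mul_self_le_one.2 h
  exact ⟨⟨c, hc1⟩, Subtype.ext hc⟩

theorem isSquare_toZMod_iff (hp : Odd p) {y : ℤ_[p]} (hy : ‖y‖ = 1) :
    IsSquare (PadicInt.toZMod y) ↔ IsSquare y := by
  refine ⟨?_, IsSquare.map _⟩
  rintro ⟨r, hr⟩
  obtain ⟨a, rfl⟩ := ZMod.ringHom_surjective (PadicInt.toZMod (p := p)) r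
  have ha : ‖a‖ = 1 := by
    rw [← toZMod_ne_zero_iff]
    exact left_ne_zero_of_mul (hr ▸ (toZMod_ne_zero_iff y).2 hy)
  have hclose : ‖a ^ 2 - y‖ < 1 := by
    rw [← toZMod_eq_zero_iff, map_sub, map_pow, hr, sq, sub_self]
  have h2 : ‖(2 : ℤ_[p])‖ = 1 := norm_two hp
  obtain ⟨z, hz, -⟩ := hensels_lemma (F := (.X ^ 2 - .C y : Polynomial ℤ_[p])) (a := a)
    (by simpa [Polynomial.derivative_X_pow, one_add_one_eq_two, ha, h2] using hclose)
  exact ⟨z, by simpa [sub_eq_zero, sq, eq_comm] using hz⟩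

theorem exists_unit_isSquare_mul_iff (hp : Odd p) : ∃ u : ℚ_[p], ‖u‖ = 1 ∧
    ∀ y : ℚ_[p], ‖y‖ = 1 → (IsSquare (u * y) ↔ ¬ IsSquare y) := by
  have hchar : ringChar (ZMod p) ≠ 2 := by
    rw [ZMod.ringChar_zmod_n]
    rintro rfl
    exact absurd hp (by decide)
  obtain ⟨r, hr⟩ := FiniteField.exists_nonsquare hchar
  obtain ⟨u, rfl⟩ := ZMod.ringHom_surjective (PadicInt.toZMod (p := p)) r
  have hu0 : PadicInt.toZMod u ≠ 0 := fun h => hr (h ▸ IsSquare.zero)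
  have hu : ‖u‖ = 1 := (toZMod_ne_zero_iff u).1 hu0
  refine ⟨u, hu, fun y hy => ?_⟩
  obtain ⟨y, rfl⟩ : ∃ z : ℤ_[p], (z : ℚ_[p]) = y := ⟨⟨y, hy.le⟩, rfl⟩
  replace hy : ‖y‖ = 1 := hy
  have hy0 := (toZMod_ne_zero_iff y).2 hy
  rw [← PadicInt.coe_mul, isSquare_coe_padicInt_iff, isSquare_coe_padicInt_iff,
    ← isSquare_toZMod_iff hp hy, ← isSquare_toZMod_iff hp (by rw [norm_mul, hu, hy, mul_one]),
    map_mul, ← quadraticChar_one_iff_isSquare (mul_ne_zero hu0 hy0),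
    ← quadraticChar_neg_one_iff_not_isSquare, map_mul,
    quadraticChar_neg_one_iff_not_isSquare.2 hr, neg_one_mul, neg_eq_iff_eq_neg]

/-- The class of `d` modulo squares, `d · (ℚ_pˣ)²`. -/
def squareClass (d : ℚ_[p]) : Set ℚ_[p] := {x | ∃ c : ℚ_[p], c ≠ 0 ∧ x = d * c ^ 2}

theorem mem_squareClass_one_iff {x : ℚ_[p]} (hx : x ≠ 0) : x ∈ squareClass 1 ↔ IsSquare x := by
  constructor
  · rintro ⟨c, -, rfl⟩
    exact ⟨c, by ring⟩
  · rintro ⟨c, rfl⟩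
    exact ⟨c, left_ne_zero_of_mul hx, by ring⟩

theorem ne_zero_of_mem_squareClass {d x : ℚ_[p]} (hd : d ≠ 0) (hx : x ∈ squareClass d) : x ≠ 0 := by
  obtain ⟨c, hc, rfl⟩ := hx
  exact mul_ne_zero hd (pow_ne_zero 2 hc)

theorem mul_mem_squareClass_iff {a d x : ℚ_[p]} (ha : a ≠ 0) :
    a * x ∈ squareClass (a * d) ↔ x ∈ squareClass d :=
  exists_congr fun c => and_congr_right fun _ => by rw [mul_assoc, mul_right_inj' ha]

theorem squareClass_sq_mul (d : ℚ_[p]) {e : ℚ_[p]} (he : e ≠ 0) :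
    squareClass (e ^ 2 * d) = squareClass d := by
  ext x
  constructor
  · rintro ⟨c, hc, rfl⟩
    exact ⟨e * c, mul_ne_zero he hc, by ring⟩
  · rintro ⟨c, hc, rfl⟩
    exact ⟨c / e, div_ne_zero hc he, by field_simp⟩

theorem sq_mul_mem_squareClass_iff {d e x : ℚ_[p]} (he : e ≠ 0) :
    e ^ 2 * x ∈ squareClass d ↔ x ∈ squareClass d := by
  rw [← squareClass_sq_mul d he, mul_mem_squareClass_iff (pow_ne_zero 2 he),
    squareClass_sq_mul d he]

theorem measurableSet_squareClass {d : ℚ_[p]} (hd : d ≠ 0) : MeasurableSet (squareClass d) := by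
  have h : squareClass d = (⋃ n : ℕ, (fun c => d * c ^ 2) '' closedBall 0 n) \ {0} := by
    ext x
    simp only [mem_sdiff, mem_iUnion, mem_image, mem_closedBall_zero_iff, mem_singleton_iff]
    constructor
    · intro hx
      have hx0 := ne_zero_of_mem_squareClass hd hx
      obtain ⟨c, -, rfl⟩ := hx
      obtain ⟨n, hn⟩ := exists_nat_ge ‖c‖
      exact ⟨⟨n, c, hn, rfl⟩, hx0⟩
    · rintro ⟨⟨n, c, hn, rfl⟩, h0⟩
      exact ⟨c, by rintro rfl; simp at h0, rfl⟩
  rw [h]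
  refine (MeasurableSet.iUnion fun n => ?_).diff (measurableSet_singleton _)
  exact ((isCompact_closedBall _ _).image (by fun_prop)).isClosed.measurableSet

theorem two_mul_volume_squareClass_one_inter_sphere (hp : Odd p) :
    2 * volume (squareClass (1 : ℚ_[p]) ∩ sphere 0 1) = ENNReal.ofReal (1 - (p : ℝ)⁻¹) := by
  obtain ⟨u, hu, hsq⟩ := exists_unit_isSquare_mul_iff hp
  have hmeas := measurableSet_squareClass (p := p) one_ne_zero
  have hcompl : sphere 0 1 \ squareClass 1 = (0 + u * ·) ⁻¹' (squareClass 1 ∩ sphere 0 1) := by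
    ext x
    simp only [mem_sdiff, mem_preimage, mem_inter_iff, mem_sphere_zero_iff_norm, zero_add,
      norm_mul, hu, one_mul]
    rw [and_comm, and_congr_left_iff]
    intro hx
    have hx0 : x ≠ 0 := norm_ne_zero_iff.1 (by simp [hx])
    have hu0 : u ≠ 0 := norm_ne_zero_iff.1 (by simp [hu])
    rw [mem_squareClass_one_iff hx0, mem_squareClass_one_iff (mul_ne_zero hu0 hx0), hsq x hx]
  have hsphere : MeasurableSet (sphere (0 : ℚ_[p]) 1) := isClosed_sphere.measurableSet
  rw [← volume_sphere_one, ← measure_inter_add_sdiff (sphere 0 1) hmeas, hcompl,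
    (measurePreserving_affine 0 hu).measure_preimage (hmeas.inter hsphere).nullMeasurableSet,
    inter_comm, two_mul]

theorem volume_squareClass_inter_sphere (hp : Odd p) {a : ℚ_[p]} (ha : a ≠ 0) :
    volume (squareClass a ∩ sphere 0 ‖a‖) =
      ENNReal.ofReal (1 / 2 * (1 - (p : ℝ)⁻¹) * ‖a‖) := by
  have hna : 0 < ‖a‖ := norm_pos_iff.2 ha
  have hpre : (a * ·) ⁻¹' (squareClass a ∩ sphere 0 ‖a‖) = squareClass 1 ∩ sphere 0 1 := by
    ext x
    simp only [mem_preimage, mem_inter_iff, mem_sphere_zero_iff_norm, norm_mul]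
    refine and_congr ?_ (mul_eq_left₀ hna.ne')
    simpa using mul_mem_squareClass_iff (d := 1) (x := x) ha
  have hmeas : MeasurableSet (squareClass a ∩ sphere 0 ‖a‖) :=
    (measurableSet_squareClass ha).inter isClosed_sphere.measurableSet
  have h := two_mul_volume_squareClass_one_inter_sphere hp
  rw [← hpre, ← Measure.map_apply (measurable_const_mul a) hmeas, map_mul_left_volume ha,
    Measure.smul_apply, smul_eq_mul, ← mul_assoc, ← ENNReal.ofReal_ofNat,
    ← ENNReal.ofReal_mul zero_le_two] at h
  calc volume (squareClass a ∩ sphere 0 ‖a‖)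
      = ENNReal.ofReal (1 / 2 * ‖a‖) * (ENNReal.ofReal (2 * ‖a‖⁻¹) *
          volume (squareClass a ∩ sphere 0 ‖a‖)) := by
        rw [← mul_assoc, ← ENNReal.ofReal_mul (by positivity)]
        field_simp
        simp
    _ = _ := by
        rw [h, ← ENNReal.ofReal_mul (by positivity)]
        congr 1
        ring

theorem ne_zero_of_norm_eq_inv_prime {d : ℚ_[p]} (hd : ‖d‖ = (p : ℝ)⁻¹) : d ≠ 0 :=
  norm_ne_zero_iff.1 (hd ▸ inv_ne_zero prime_cast_pos.ne')

theorem exists_norm_eq_of_mem_squareClass {d x : ℚ_[p]} (hd : ‖d‖ = (p : ℝ)⁻¹)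
    (hx : x ∈ squareClass d) (hx1 : ‖x‖ ≤ 1) : ∃ l : ℕ, ‖x‖ = (p : ℝ)⁻¹ ^ (2 * l + 1) := by
  obtain ⟨c, hc, rfl⟩ := hx
  have hc1 : ‖c‖ ≤ 1 := by
    by_contra! hlt
    have hinv : ‖c⁻¹‖ ≤ (p : ℝ)⁻¹ := by
      rw [← norm_lt_one_iff_norm_le_inv, norm_inv]
      exact inv_lt_one_of_one_lt₀ hlt
    rw [norm_inv, inv_le_inv₀ (norm_pos_iff.2 hc) prime_cast_pos] at hinv
    rw [norm_mul, norm_pow, hd, inv_mul_le_iff₀ prime_cast_pos, mul_one] at hx1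
    nlinarith [one_lt_prime_cast (p := p)]
  have hmem : c ∈ closedBall (0 : ℚ_[p]) 1 \ {0} := ⟨by simpa using hc1, hc⟩
  rw [closedBall_one_diff_zero fun x => ⟨x, rfl⟩, mem_iUnion] at hmem
  obtain ⟨l, hl⟩ := hmem
  rw [mem_sphere_zero_iff_norm] at hl
  exact ⟨l, by rw [norm_mul, norm_pow, hd, hl]; ring⟩

theorem notMem_squareClass_of_norm_eq_one {d x : ℚ_[p]} (hd : ‖d‖ = (p : ℝ)⁻¹) (hx : ‖x‖ = 1) :
    x ∉ squareClass d := by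
  intro hmem
  obtain ⟨l, hl⟩ := exists_norm_eq_of_mem_squareClass hd hmem hx.le
  exact (pow_lt_one₀ (inv_nonneg.2 prime_cast_pos.le) inv_prime_lt_one (by simp)).ne (hl ▸ hx)

theorem volume_squareClass_inter_sphere_pow (hp : Odd p) {d : ℚ_[p]} (hd : ‖d‖ = (p : ℝ)⁻¹)
    (l : ℕ) : volume (squareClass d ∩ sphere 0 ((p : ℝ)⁻¹ ^ (2 * l + 1))) =
      ENNReal.ofReal (1 / 2 * (1 - (p : ℝ)⁻¹) * (p : ℝ)⁻¹ ^ (2 * l + 1)) := by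
  have hd0 := ne_zero_of_norm_eq_inv_prime hd
  have hpl : (p : ℚ_[p]) ^ l ≠ 0 := pow_ne_zero l padicCast_prime_ne_zero
  have hnorm : ‖((p : ℚ_[p]) ^ l) ^ 2 * d‖ = (p : ℝ)⁻¹ ^ (2 * l + 1) := by
    rw [norm_mul, norm_pow, norm_pow, Padic.norm_p, hd]
    ring
  rw [← hnorm, ← squareClass_sq_mul d hpl,
    volume_squareClass_inter_sphere hp (mul_ne_zero (pow_ne_zero 2 hpl) hd0)]

theorem closedBall_one_inter_squareClass {d : ℚ_[p]} (hd : ‖d‖ = (p : ℝ)⁻¹) :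
    closedBall 0 1 ∩ squareClass d =
      ⋃ l : ℕ, squareClass d ∩ sphere 0 ((p : ℝ)⁻¹ ^ (2 * l + 1)) := by
  ext x
  simp only [mem_inter_iff, mem_closedBall_zero_iff, mem_iUnion, mem_sphere_zero_iff_norm]
  constructor
  · rintro ⟨hx1, hx⟩
    exact (exists_norm_eq_of_mem_squareClass hd hx hx1).imp fun l hl => ⟨hx, hl⟩
  · rintro ⟨l, hx, hl⟩
    exact ⟨hl.trans_le (pow_le_one₀ (inv_nonneg.2 prime_cast_pos.le) inv_prime_lt_one.le), hx⟩

theorem setLIntegral_closedBall_inter_squareClass (hp : Odd p) {d : ℚ_[p]}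
    (hd : ‖d‖ = (p : ℝ)⁻¹) (φ : ℝ → ℝ≥0∞) :
    ∫⁻ x in closedBall 0 1 ∩ squareClass d, φ ‖x‖ =
      ∑' l : ℕ, ENNReal.ofReal (1 / 2 * (1 - (p : ℝ)⁻¹) * (p : ℝ)⁻¹ ^ (2 * l + 1)) *
        φ ((p : ℝ)⁻¹ ^ (2 * l + 1)) := by
  have hd0 := ne_zero_of_norm_eq_inv_prime hd
  have hmeas : ∀ l : ℕ, MeasurableSet (squareClass d ∩ sphere 0 ((p : ℝ)⁻¹ ^ (2 * l + 1))) :=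
    fun l => (measurableSet_squareClass hd0).inter isClosed_sphere.measurableSet
  have hdisj : Pairwise (Function.onFun Disjoint fun l : ℕ =>
      squareClass d ∩ sphere 0 ((p : ℝ)⁻¹ ^ (2 * l + 1))) := fun i j hij =>
    disjoint_left.2 fun x hi hj => hij <| by
      have h := (mem_sphere_zero_iff_norm.1 hi.2).symm.trans (mem_sphere_zero_iff_norm.1 hj.2)
      have := pow_right_injective₀ (inv_pos.2 prime_cast_pos) inv_prime_lt_one.ne h
      lia
  rw [closedBall_one_inter_squareClass hd, lintegral_iUnion hmeas hdisj]
  refine tsum_congr fun l => ?_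
  rw [setLIntegral_congr_fun (g := fun _ => φ ((p : ℝ)⁻¹ ^ (2 * l + 1))) (hmeas l)
    fun x hx => by rw [mem_sphere_zero_iff_norm.1 hx.2], setLIntegral_const,
    volume_squareClass_inter_sphere_pow hp hd, mul_comm]

/-! ### Binary quadratic forms by content and discriminant -/

/-- Binary quadratic forms `a X² + b X Y + c Y²` over `ℚ_p`, encoded by `(a, b, c)`; the sup norm
is the content, and the maps `F₁`, `F₂` take values here. -/
abbrev QForm (p : ℕ) [Fact p.Prime] := ℚ_[p] × ℚ_[p] × ℚ_[p]

/-- The discriminant `b² - 4 a c` of a binary quadratic form. -/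
noncomputable def disc (x : QForm p) : ℚ_[p] := x.2.1 ^ 2 - 4 * x.1 * x.2.2

@[fun_prop]
theorem continuous_disc : Continuous (disc : QForm p → ℚ_[p]) := by
  unfold disc
  fun_prop

theorem disc_smul (a : ℚ_[p]) (x : QForm p) : disc (a • x) = a ^ 2 * disc x := by
  simp only [disc, Prod.smul_fst, Prod.smul_snd, smul_eq_mul]
  ring

theorem norm_four (hp : Odd p) : ‖(4 : ℚ_[p])‖ = 1 := by
  rw [show (4 : ℚ_[p]) = 2 * 2 by norm_num, norm_mul, norm_two hp, one_mul]

instance isAddHaarMeasure_volume_prod {E F : Type*} [AddGroup E] [TopologicalSpace E]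
    [MeasureSpace E] [MeasurableAdd E] [AddGroup F] [TopologicalSpace F] [MeasureSpace F]
    [MeasurableAdd F] [SFinite (volume : Measure E)] [SFinite (volume : Measure F)]
    [(volume : Measure E).IsAddHaarMeasure] [(volume : Measure F).IsAddHaarMeasure] :
    (volume : Measure (E × F)).IsAddHaarMeasure :=
  Measure.prod.instIsAddHaarMeasure _ _

instance isAddHaarMeasure_volume_qForm : (volume : Measure (QForm p)).IsAddHaarMeasure :=
  isAddHaarMeasure_volume_prod

theorem exists_norm_eq_prod {E F : Type*} [NormedAddCommGroup E] [NormedAddCommGroup F]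
    (hE : ∀ x : E, ∃ a : ℚ_[p], ‖a‖ = ‖x‖) (hF : ∀ x : F, ∃ a : ℚ_[p], ‖a‖ = ‖x‖) (x : E × F) :
    ∃ a : ℚ_[p], ‖a‖ = ‖x‖ := by
  rcases max_choice ‖x.1‖ ‖x.2‖ with h | h <;> rw [Prod.norm_def, h]
  exacts [hE x.1, hF x.2]

theorem volume_closedBall_prod {E F : Type*} [NormedAddCommGroup E] [NormedAddCommGroup F]
    [MeasureSpace E] [MeasureSpace F] [SFinite (volume : Measure F)] (r : ℝ) :
    volume (closedBall (0 : E × F) r) = volume (closedBall (0 : E) r) *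
      volume (closedBall (0 : F) r) := by
  rw [← Prod.mk_zero_zero, ← closedBall_prod_same, Measure.volume_eq_prod, Measure.prod_prod]

theorem exists_norm_eq_qForm (x : QForm p) : ∃ a : ℚ_[p], ‖a‖ = ‖x‖ :=
  have hself (y : ℚ_[p]) : ∃ a : ℚ_[p], ‖a‖ = ‖y‖ := ⟨y, rfl⟩
  exists_norm_eq_prod hself (exists_norm_eq_prod hself hself) x

theorem volume_qForm_closedBall_inv_prime :
    volume (closedBall (0 : QForm p) (p : ℝ)⁻¹) =
      (p : ℝ≥0∞)⁻¹ ^ 3 * volume (closedBall (0 : QForm p) 1) := by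
  simp only [volume_closedBall_prod, volume_closedBall_inv_prime, volume_closedBall_one]
  ring

theorem norm_sub_le_max (x y : ℚ_[p]) : ‖x - y‖ ≤ max ‖x‖ ‖y‖ := by
  simpa [sub_eq_add_neg] using IsUltrametricDist.norm_add_le_max x (-y)

theorem norm_lt_iff_of_norm_sub_lt {x y : ℚ_[p]} {r : ℝ} (h : ‖x - y‖ < r) :
    ‖x‖ < r ↔ ‖y‖ < r := by
  constructor <;> intro hlt
  · simpa using (norm_sub_le_max x (x - y)).trans_lt (max_lt hlt h)
  · simpa using (IsUltrametricDist.norm_add_le_max (x - y) y).trans_lt (max_lt h hlt)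

theorem norm_disc_le_one {x : QForm p} (hx : ‖x‖ ≤ 1) : ‖disc x‖ ≤ 1 := by
  obtain ⟨ha, hb, hc⟩ : ‖x.1‖ ≤ 1 ∧ ‖x.2.1‖ ≤ 1 ∧ ‖x.2.2‖ ≤ 1 := by
    simpa [Prod.norm_def] using hx
  have h4 : ‖(4 : ℚ_[p])‖ ≤ 1 := mod_cast Padic.norm_int_le_one (p := p) 4
  refine (norm_sub_le_max _ _).trans (max_le ?_ ?_)
  · rw [norm_pow]
    exact pow_le_one₀ (norm_nonneg _) hb
  · rw [norm_mul, norm_mul]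
    exact mul_le_one₀ (mul_le_one₀ h4 (norm_nonneg _) ha) (norm_nonneg _) hc

theorem norm_mid_lt_one_iff (hp : Odd p) {x : QForm p} (hx : ‖x‖ ≤ 1) (hlt : ‖disc x‖ < 1) :
    ‖x.2.1‖ < 1 ↔ ‖x.1‖ < 1 ∨ ‖x.2.2‖ < 1 := by
  obtain ⟨ha, -, hc⟩ : ‖x.1‖ ≤ 1 ∧ ‖x.2.1‖ ≤ 1 ∧ ‖x.2.2‖ ≤ 1 := by
    simpa [Prod.norm_def] using hx
  rw [← pow_lt_one_iff_of_nonneg (norm_nonneg _) two_ne_zero, ← norm_pow,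
    norm_lt_iff_of_norm_sub_lt hlt, norm_mul, norm_mul, norm_four hp, one_mul]
  constructor
  · intro h
    by_contra! h1
    exact h.not_ge (one_le_mul_of_one_le_of_one_le h1.1 h1.2)
  · rintro (h | h)
    · exact mul_lt_one_of_nonneg_of_lt_one_left (norm_nonneg _) h hc
    · exact mul_lt_one_of_nonneg_of_lt_one_right ha (norm_nonneg _) h

theorem setLIntegral_disc_of_norm_eq_one (hp : Odd p) {a b : ℚ_[p]} (ha : ‖a‖ = 1) (hb : ‖b‖ ≤ 1)
    {h : ℚ_[p] → ℝ≥0∞} (hh : Measurable h) :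
    ∫⁻ c in closedBall 0 1, h (b ^ 2 - 4 * a * c) = ∫⁻ y in closedBall 0 1, h y := by
  have hb2 : ‖b ^ 2‖ ≤ 1 := by
    rw [norm_pow]
    exact pow_le_one₀ (norm_nonneg b) hb
  have hu : ‖-(4 * a)‖ = 1 := by rw [norm_neg, norm_mul, norm_four hp, ha, one_mul]
  rw [← setLIntegral_closedBall_affine hb2 hu hh]
  simp only [neg_mul, ← sub_eq_add_neg]

theorem indicator_sphere_disc (hp : Odd p) {h : ℚ_[p] → ℝ≥0∞} (h1 : ∀ y, ‖y‖ = 1 → h y = 0) :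
    (sphere (0 : QForm p) 1).indicator (fun x => h (disc x)) =
      (sphere 0 1 ×ˢ closedBall 0 1 ×ˢ closedBall 0 1).indicator (fun x => h (disc x)) +
      (closedBall 0 1 ×ˢ ball 0 1 ×ˢ sphere 0 1).indicator (fun x => h (disc x)) := by
  classical
  ext x
  by_cases h0 : h (disc x) = 0
  · simp [indicator_apply, h0]
  by_cases hx : ‖x‖ ≤ 1
  · have hmid := norm_mid_lt_one_iff hp hx
      ((norm_disc_le_one hx).lt_of_ne fun h' => h0 (h1 _ h'))
    have hx' : ‖x.1‖ ≤ 1 ∧ ‖x.2.1‖ ≤ 1 ∧ ‖x.2.2‖ ≤ 1 := by simpa [Prod.norm_def] using hx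
    have hlt : ‖x‖ < 1 ↔ ‖x.1‖ < 1 ∧ ‖x.2.1‖ < 1 ∧ ‖x.2.2‖ < 1 := by simp [Prod.norm_def]
    have heq {r : ℝ} (hr : r ≤ 1) : r = 1 ↔ ¬ r < 1 := ⟨fun e => e.not_lt, hr.eq_of_not_lt⟩
    simp only [Pi.add_apply, indicator_apply, mem_prod, mem_sphere_zero_iff_norm,
      mem_closedBall_zero_iff, mem_ball_zero_iff, hx'.1, hx'.2.1, hx'.2.2, and_true, true_and,
      heq hx, heq hx'.1, heq hx'.2.2, hlt]
    by_cases ha : ‖x.1‖ < 1 <;> by_cases hc : ‖x.2.2‖ < 1 <;> simp [ha, hc, hmid]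
  · have hnot : ¬ (‖x.1‖ ≤ 1 ∧ ‖x.2.1‖ ≤ 1 ∧ ‖x.2.2‖ ≤ 1) := by simpa [Prod.norm_def] using hx
    simp only [Pi.add_apply]
    rw [indicator_of_notMem, indicator_of_notMem, indicator_of_notMem, add_zero]
    · exact fun h' => hnot (by simpa using And.intro h'.1 (And.intro
        (ball_subset_closedBall h'.2.1) (sphere_subset_closedBall h'.2.2)))
    · exact fun h' => hnot (by simpa using And.intro (sphere_subset_closedBall h'.1) h'.2)
    · exact fun h' => hx (by simpa using sphere_subset_closedBall h')

theorem setLIntegral_disc_sphere_prod (hp : Odd p) {h : ℚ_[p] → ℝ≥0∞} (hh : Measurable h) :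
    ∫⁻ x in sphere 0 1 ×ˢ closedBall 0 1 ×ˢ closedBall 0 1, h (disc (p := p) x) =
      ENNReal.ofReal (1 - (p : ℝ)⁻¹) * ∫⁻ y in closedBall 0 1, h y := by
  have hinner {a : ℚ_[p]} (ha : ‖a‖ = 1) :
      ∫⁻ x in closedBall 0 1 ×ˢ closedBall 0 1, h (disc (a, x)) = ∫⁻ y in closedBall 0 1, h y := by
    rw [Measure.volume_eq_prod, setLIntegral_prod _ (by fun_prop),
      setLIntegral_congr_fun (g := fun _ => ∫⁻ y in closedBall 0 1, h y) measurableSet_closedBall,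
      setLIntegral_const, volume_closedBall_one, mul_one]
    exact fun b hb => setLIntegral_disc_of_norm_eq_one hp ha (by simpa using hb) hh
  rw [Measure.volume_eq_prod, setLIntegral_prod _ (by fun_prop),
    setLIntegral_congr_fun (g := fun _ => ∫⁻ y in closedBall 0 1, h y)
      isClosed_sphere.measurableSet, setLIntegral_const, volume_sphere_one, mul_comm]
  exact fun a ha => hinner (by simpa using ha)

theorem setLIntegral_disc_prod_sphere (hp : Odd p) {h : ℚ_[p] → ℝ≥0∞} (hh : Measurable h) :
    ∫⁻ x in closedBall 0 1 ×ˢ ball 0 1 ×ˢ sphere 0 1, h (disc (p := p) x) =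
      ENNReal.ofReal ((p : ℝ)⁻¹ * (1 - (p : ℝ)⁻¹)) * ∫⁻ y in closedBall 0 1, h y := by
  rw [Measure.volume_eq_prod, setLIntegral_prod_symm _ (by fun_prop),
    setLIntegral_congr_fun (g := fun _ => ∫⁻ y in closedBall 0 1, h y)
      (measurableSet_ball.prod isClosed_sphere.measurableSet),
    setLIntegral_const, Measure.volume_eq_prod, Measure.prod_prod, volume_ball_one,
    volume_sphere_one, ENNReal.ofReal_mul (inv_nonneg.2 prime_cast_pos.le),
    ENNReal.ofReal_inv_of_pos prime_cast_pos, ENNReal.ofReal_natCast, mul_comm]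
  rintro ⟨b, c⟩ ⟨hb, hc⟩
  rw [← setLIntegral_disc_of_norm_eq_one hp (a := c) (b := b) (by simpa using hc)
    (le_of_lt (by simpa using hb)) hh]
  simp only [disc, mul_right_comm _ c]

theorem setLIntegral_sphere_disc (hp : Odd p) {h : ℚ_[p] → ℝ≥0∞} (hh : Measurable h)
    (h1 : ∀ y, ‖y‖ = 1 → h y = 0) :
    ∫⁻ x in sphere (0 : QForm p) 1, h (disc x) =
      ENNReal.ofReal (1 - (p : ℝ)⁻¹ ^ 2) * ∫⁻ y in closedBall 0 1, h y := by
  have hm : Measurable fun x : QForm p => h (disc x) := hh.comp continuous_disc.measurable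
  have hS : MeasurableSet (sphere (0 : ℚ_[p]) 1) := isClosed_sphere.measurableSet
  have hC : MeasurableSet (closedBall (0 : ℚ_[p]) 1) := measurableSet_closedBall
  rw [← lintegral_indicator isClosed_sphere.measurableSet, indicator_sphere_disc hp h1]
  simp only [Pi.add_apply]
  rw [lintegral_add_left (hm.indicator (hS.prod (hC.prod hC))),
    lintegral_indicator (hS.prod (hC.prod hC)),
    lintegral_indicator (hC.prod (measurableSet_ball.prod hS)),
    setLIntegral_disc_sphere_prod hp hh, setLIntegral_disc_prod_sphere hp hh, ← add_mul,
    ← ENNReal.ofReal_add]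
  · congr 2
    ring
  · exact sub_nonneg.2 inv_prime_lt_one.le
  · exact mul_nonneg (inv_nonneg.2 prime_cast_pos.le) (sub_nonneg.2 inv_prime_lt_one.le)

/-! ### The weight function -/

/-- The level `l` encoded by a ratio `m² / |P| = p · p ^ (2 l)`, where `m` is the content of `F_j`
and `|d| = 1 / p`. Other ratios get a junk value. -/
noncomputable def level (p : ℕ) (r : ℝ) : ℕ := Nat.log p ⌊r⌋₊ / 2

theorem level_prime_mul_pow (l : ℕ) : level p ((p : ℝ) * (p : ℝ) ^ (2 * l)) = l := by
  have hp1 : 1 < p := (Fact.out : p.Prime).one_lt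
  rw [level, ← pow_succ', ← Nat.cast_pow, Nat.floor_natCast, Nat.log_pow hp1]
  omega

@[fun_prop]
theorem measurable_level (q : ℕ) : Measurable (level q) :=
  (measurable_of_countable fun n => Nat.log q n / 2).comp Nat.measurable_floor

/-- The integrand of the local zeta integral as a function of `P` and of the contents of `F₁`, `F₂`,
with an arbitrary function `w` of the two levels in place of `β(l₁) β(l₂)`. -/
noncomputable def levelWeight (w : ℕ → ℕ → ℝ≥0∞) (s : ℝ) (d P : ℚ_[p]) (m₁ m₂ : ℝ) : ℝ≥0∞ :=
  (squareClass d).indicator (fun P => w (level p (m₁ ^ 2 / ‖P‖)) (level p (m₂ ^ 2 / ‖P‖)) *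
    ENNReal.ofReal (‖P‖ ^ (s - 2))) P

section LevelWeight

variable {w : ℕ → ℕ → ℝ≥0∞} {s : ℝ} {d : ℚ_[p]}

theorem levelWeight_of_notMem {P : ℚ_[p]} (hP : P ∉ squareClass d) (m₁ m₂ : ℝ) :
    levelWeight w s d P m₁ m₂ = 0 :=
  indicator_of_notMem hP _

theorem levelWeight_of_mem {P : ℚ_[p]} (hP : P ∈ squareClass d) (m₁ m₂ : ℝ) :
    levelWeight w s d P m₁ m₂ = w (level p (m₁ ^ 2 / ‖P‖)) (level p (m₂ ^ 2 / ‖P‖)) *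
      ENNReal.ofReal (‖P‖ ^ (s - 2)) :=
  indicator_of_mem hP _

theorem levelWeight_zero (hd : d ≠ 0) (m₁ m₂ : ℝ) : levelWeight w s d 0 m₁ m₂ = 0 :=
  levelWeight_of_notMem (fun h => ne_zero_of_mem_squareClass hd h rfl) _ _

theorem levelWeight_comm (hw : ∀ i j, w i j = w j i) (P : ℚ_[p]) (m₁ m₂ : ℝ) :
    levelWeight w s d P m₁ m₂ = levelWeight w s d P m₂ m₁ := by
  simp only [levelWeight, hw (level p (m₁ ^ 2 / _))]

theorem levelWeight_sq_mul {e : ℚ_[p]} (he : e ≠ 0) (P : ℚ_[p]) (m₁ m₂ : ℝ) :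
    levelWeight w s d (e ^ 2 * P) (‖e‖ * m₁) (‖e‖ * m₂) =
      ENNReal.ofReal (‖e‖ ^ (2 * (s - 2))) * levelWeight w s d P m₁ m₂ := by
  have hne : ‖e‖ ≠ 0 := norm_ne_zero_iff.2 he
  by_cases hP : P ∈ squareClass d
  · have hratio (m : ℝ) : (‖e‖ * m) ^ 2 / ‖e ^ 2 * P‖ = m ^ 2 / ‖P‖ := by
      rw [norm_mul, norm_pow, mul_pow, mul_div_mul_left _ _ (pow_ne_zero 2 hne)]
    rw [levelWeight_of_mem hP, levelWeight_of_mem ((sq_mul_mem_squareClass_iff he).2 hP), hratio,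
      hratio, norm_mul, norm_pow, Real.mul_rpow (by positivity) (norm_nonneg _),
      ENNReal.ofReal_mul (by positivity), Real.rpow_mul (norm_nonneg _), Real.rpow_two]
    ring
  · rw [levelWeight_of_notMem hP,
      levelWeight_of_notMem (hP ∘ (sq_mul_mem_squareClass_iff he).1), mul_zero]

theorem measurable_levelWeight (hd : d ≠ 0) {α : Type*} [MeasurableSpace α] {f : α → ℚ_[p]}
    {g h : α → ℝ} (hf : Measurable f) (hg : Measurable g) (hh : Measurable h) :
    Measurable fun x => levelWeight w s d (f x) (g x) (h x) := by
  have hw : Measurable fun n : ℕ × ℕ => w n.1 n.2 := measurable_of_countable _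
  have hlevels : Measurable fun x => (level p (g x ^ 2 / ‖f x‖), level p (h x ^ 2 / ‖f x‖)) := by
    fun_prop
  have hfx : Measurable fun x => w (level p (g x ^ 2 / ‖f x‖)) (level p (h x ^ 2 / ‖f x‖)) *
      ENNReal.ofReal (‖f x‖ ^ (s - 2)) :=
    (hw.comp hlevels).mul (by fun_prop)
  exact hfx.indicator (hf (measurableSet_squareClass hd))

/-- The weight of a pair `(x, y)` with `F₁` of content `1` and `F₂(x, y)` the given form. -/
noncomputable def formWeight (w : ℕ → ℕ → ℝ≥0∞) (s : ℝ) (d : ℚ_[p]) (x : QForm p) : ℝ≥0∞ :=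
  levelWeight w s d (disc x) 1 ‖x‖

theorem measurable_formWeight (hd : d ≠ 0) : Measurable (formWeight w s d) :=
  measurable_levelWeight hd (by fun_prop) (by fun_prop) (by fun_prop)

theorem formWeight_zero (hd : d ≠ 0) : formWeight w s d 0 = 0 := by
  rw [formWeight, show disc (0 : QForm p) = 0 by simp [disc], levelWeight_zero hd]

/-- The contribution of the forms of content `p ^ (-c)` to the integral of
`formWeight w s d`. -/
noncomputable def contentTerm (w : ℕ → ℕ → ℝ≥0∞) (s : ℝ) (p c : ℕ) : ℝ≥0∞ :=
  ENNReal.ofReal ((p : ℝ)⁻¹ ^ (3 * c)) * (ENNReal.ofReal (1 - (p : ℝ)⁻¹ ^ 2) *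
    ∑' l : ℕ, ENNReal.ofReal (1 / 2 * (1 - (p : ℝ)⁻¹) * (p : ℝ)⁻¹ ^ (2 * l + 1)) *
      (w (c + l) l * ENNReal.ofReal (((p : ℝ)⁻¹ ^ (2 * c + 2 * l + 1)) ^ (s - 2))))

theorem setLIntegral_levelWeight_prime_pow (hp : Odd p) (hd : ‖d‖ = (p : ℝ)⁻¹) (c : ℕ) :
    ∫⁻ y in closedBall 0 1, levelWeight w s d (((p : ℚ_[p]) ^ c) ^ 2 * y) 1 ((p : ℝ)⁻¹ ^ c) =
      ∑' l : ℕ, ENNReal.ofReal (1 / 2 * (1 - (p : ℝ)⁻¹) * (p : ℝ)⁻¹ ^ (2 * l + 1)) *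
        (w (c + l) l * ENNReal.ofReal (((p : ℝ)⁻¹ ^ (2 * c + 2 * l + 1)) ^ (s - 2))) := by
  have hpc : (p : ℚ_[p]) ^ c ≠ 0 := pow_ne_zero c padicCast_prime_ne_zero
  have hp0 := (prime_cast_pos (p := p)).ne'
  have hind (y : ℚ_[p]) : levelWeight w s d (((p : ℚ_[p]) ^ c) ^ 2 * y) 1 ((p : ℝ)⁻¹ ^ c) =
      (squareClass d).indicator (fun y =>
        w (level p (1 / ((p : ℝ)⁻¹ ^ (2 * c) * ‖y‖)))
          (level p ((p : ℝ)⁻¹ ^ (2 * c) / ((p : ℝ)⁻¹ ^ (2 * c) * ‖y‖))) *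
        ENNReal.ofReal (((p : ℝ)⁻¹ ^ (2 * c) * ‖y‖) ^ (s - 2))) y := by
    by_cases hy : y ∈ squareClass d
    · rw [levelWeight_of_mem ((sq_mul_mem_squareClass_iff hpc).2 hy), indicator_of_mem hy]
      simp only [norm_mul, norm_pow, Padic.norm_p, one_pow, ← pow_mul, mul_comm c 2]
    · rw [levelWeight_of_notMem (hy ∘ (sq_mul_mem_squareClass_iff hpc).1), indicator_of_notMem hy]
  have hlevel (l : ℕ) : 1 / ((p : ℝ)⁻¹ ^ (2 * c) * (p : ℝ)⁻¹ ^ (2 * l + 1)) =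
        p * (p : ℝ) ^ (2 * (c + l)) ∧
      (p : ℝ)⁻¹ ^ (2 * c) / ((p : ℝ)⁻¹ ^ (2 * c) * (p : ℝ)⁻¹ ^ (2 * l + 1)) =
        p * (p : ℝ) ^ (2 * l) := by
    simp only [inv_pow]
    constructor <;> field_simp <;> ring
  simp only [hind]
  rw [setLIntegral_indicator (measurableSet_squareClass (ne_zero_of_norm_eq_inv_prime hd)),
    inter_comm, setLIntegral_closedBall_inter_squareClass hp hd fun r =>
      w (level p (1 / ((p : ℝ)⁻¹ ^ (2 * c) * r)))
        (level p ((p : ℝ)⁻¹ ^ (2 * c) / ((p : ℝ)⁻¹ ^ (2 * c) * r))) *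
      ENNReal.ofReal (((p : ℝ)⁻¹ ^ (2 * c) * r) ^ (s - 2))]
  simp only [(hlevel _).1, (hlevel _).2, level_prime_mul_pow]
  simp only [← pow_add, ← add_assoc]

theorem setLIntegral_sphere_formWeight (hp : Odd p) (hd : ‖d‖ = (p : ℝ)⁻¹) (c : ℕ) :
    ((p : ℝ≥0∞)⁻¹ ^ 3) ^ c * ∫⁻ x in sphere (0 : QForm p) 1,
      formWeight w s d ((p : ℚ_[p]) ^ c • x) = contentTerm w s p c := by
  have hpc : (p : ℚ_[p]) ^ c ≠ 0 := pow_ne_zero c padicCast_prime_ne_zero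
  have hsphere : EqOn (fun x : QForm p => formWeight w s d ((p : ℚ_[p]) ^ c • x))
      (fun x => levelWeight w s d (((p : ℚ_[p]) ^ c) ^ 2 * disc x) 1 ((p : ℝ)⁻¹ ^ c))
      (sphere 0 1) := by
    intro x hx
    simp only [formWeight, disc_smul, norm_smul, norm_pow, Padic.norm_p,
      mem_sphere_zero_iff_norm.1 hx, mul_one]
  rw [setLIntegral_congr_fun isClosed_sphere.measurableSet hsphere,
    setLIntegral_sphere_disc hp (h := fun y =>
      levelWeight w s d (((p : ℚ_[p]) ^ c) ^ 2 * y) 1 ((p : ℝ)⁻¹ ^ c))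
      (measurable_levelWeight (ne_zero_of_norm_eq_inv_prime hd) (by fun_prop) (by fun_prop)
        (by fun_prop)),
    setLIntegral_levelWeight_prime_pow hp hd, contentTerm,
    ENNReal.ofReal_pow (inv_nonneg.2 prime_cast_pos.le), ENNReal.ofReal_inv_of_pos prime_cast_pos,
    ENNReal.ofReal_natCast, pow_mul]
  exact fun y hy => levelWeight_of_notMem
    (notMem_squareClass_of_norm_eq_one hd hy ∘ (sq_mul_mem_squareClass_iff hpc).1) _ _

theorem setLIntegral_closedBall_formWeight (hp : Odd p) (hd : ‖d‖ = (p : ℝ)⁻¹) :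
    ∫⁻ x in closedBall (0 : QForm p) 1, formWeight w s d x = ∑' c, contentTerm w s p c := by
  have hd0 := ne_zero_of_norm_eq_inv_prime hd
  rw [setLIntegral_closedBall_one_eq_tsum exists_norm_eq_qForm volume_qForm_closedBall_inv_prime
    (measurable_formWeight hd0) (formWeight_zero hd0)]
  simp only [setLIntegral_sphere_formWeight hp hd]

theorem setLIntegral_ball_formWeight (hp : Odd p) (hd : ‖d‖ = (p : ℝ)⁻¹) :
    ∫⁻ x in ball (0 : QForm p) 1, formWeight w s d x = ∑' c, contentTerm w s p (c + 1) := by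
  have hd0 := ne_zero_of_norm_eq_inv_prime hd
  have hzero : EqOn (fun x : QForm p => (ball (0 : QForm p) 1).indicator (formWeight w s d)
      ((p : ℚ_[p]) ^ 0 • x)) 0 (sphere 0 1) := by
    intro x hx
    simp only [pow_zero, one_smul]
    exact indicator_of_notMem (fun h => (mem_ball.1 h).ne (mem_sphere.1 hx)) _
  have hsucc (c : ℕ) : EqOn (fun x : QForm p => (ball (0 : QForm p) 1).indicator
      (formWeight w s d) ((p : ℚ_[p]) ^ (c + 1) • x))
      (fun x => formWeight w s d ((p : ℚ_[p]) ^ (c + 1) • x)) (sphere 0 1) := by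
    intro x hx
    refine indicator_of_mem ?_ _
    rw [mem_ball_zero_iff, norm_smul, mem_sphere_zero_iff_norm.1 hx, mul_one, norm_pow,
      Padic.norm_p]
    exact pow_lt_one₀ (inv_nonneg.2 prime_cast_pos.le) inv_prime_lt_one c.succ_ne_zero
  rw [← inter_eq_left.2 (ball_subset_closedBall (x := (0 : QForm p)) (ε := 1)),
    ← setLIntegral_indicator measurableSet_ball,
    setLIntegral_closedBall_one_eq_tsum exists_norm_eq_qForm volume_qForm_closedBall_inv_prime
      ((measurable_formWeight hd0).indicator measurableSet_ball) (by simp [formWeight_zero hd0]),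
    tsum_eq_zero_add' ENNReal.summable,
    setLIntegral_congr_fun isClosed_sphere.measurableSet hzero]
  simp only [Pi.zero_apply, lintegral_zero, mul_zero, zero_add]
  refine tsum_congr fun c => ?_
  rw [setLIntegral_congr_fun isClosed_sphere.measurableSet (hsucc c),
    setLIntegral_sphere_formWeight hp hd]

end LevelWeight

/-! ### Haar measure on `2 × 2` matrices -/

/-- The additive group `M₂(ℚ_p)`. -/
abbrev Mat (p : ℕ) [Fact p.Prime] := Matrix (Fin 2) (Fin 2) ℚ_[p]

instance : BorelSpace (Mat p) := inferInstanceAs (BorelSpace (Fin 2 → Fin 2 → ℚ_[p]))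

instance : LocallyCompactSpace (Mat p) :=
  inferInstanceAs (LocallyCompactSpace (Fin 2 → Fin 2 → ℚ_[p]))

instance : SecondCountableTopology (Mat p) :=
  inferInstanceAs (SecondCountableTopology (Fin 2 → Fin 2 → ℚ_[p]))

noncomputable instance : MeasureSpace (Mat p) where
  volume := (volume : Measure (Fin 2 → Fin 2 → ℚ_[p]))

instance : (volume : Measure (Mat p)).IsAddHaarMeasure :=
  have : (volume : Measure (Fin 2 → ℚ_[p])).IsAddHaarMeasure := Measure.pi.isAddHaarMeasure _
  Measure.pi.isAddHaarMeasure fun _ : Fin 2 => (volume : Measure (Fin 2 → ℚ_[p]))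

/-- The matrices with all entries of absolute value at most `r`; `boundedMatrices p 1` is the
lattice `M₂(ℤ_p)`. -/
def boundedMatrices (p : ℕ) [Fact p.Prime] (r : ℝ) : Set (Mat p) := {A | ∀ i j, ‖A i j‖ ≤ r}

theorem boundedMatrices_eq_pi (r : ℝ) : boundedMatrices p r =
    univ.pi fun _ => univ.pi fun _ => closedBall (0 : ℚ_[p]) r := by
  ext A
  exact ⟨fun h i _ j _ => mem_closedBall_zero_iff.2 (h i j),
    fun h i j => mem_closedBall_zero_iff.1 (h i trivial j trivial)⟩

theorem measurableSet_boundedMatrices (r : ℝ) : MeasurableSet (boundedMatrices p r) := by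
  rw [boundedMatrices_eq_pi]
  exact .univ_pi fun _ => .univ_pi fun _ => measurableSet_closedBall

theorem volume_boundedMatrices (r : ℝ) :
    volume (boundedMatrices p r) = volume (closedBall (0 : ℚ_[p]) r) ^ 4 := by
  rw [boundedMatrices_eq_pi]
  refine (volume_pi_pi fun _ : Fin 2 => univ.pi fun _ : Fin 2 => closedBall (0 : ℚ_[p]) r).trans ?_
  simp only [volume_pi_pi, Finset.prod_const, Finset.card_univ, Fintype.card_fin, ← pow_mul]

theorem volume_boundedMatrices_one : volume (boundedMatrices p 1) = 1 := by
  rw [volume_boundedMatrices, volume_closedBall_one, one_pow]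

theorem distribHaarChar_mat_scalar (u : ℚ_[p]ˣ) :
    distribHaarChar (Mat p) (GeneralLinearGroup.scalar (Fin 2) u) = ‖(u : ℚ_[p])‖₊ ^ 4 := by
  have hsmul : GeneralLinearGroup.scalar (Fin 2) u • boundedMatrices p 1 =
      boundedMatrices p ‖(u : ℚ_[p])‖ := by
    ext A
    rw [mem_smul_set_iff_inv_smul_mem, ← map_inv, Units.smul_def, smul_eq_mul,
      GeneralLinearGroup.coe_scalar, scalar_apply, ← smul_eq_diagonal_mul]
    simp [boundedMatrices, inv_mul_le_iff₀]
  have hball := distribHaarChar_mul volume u (closedBall (0 : ℚ_[p]) 1)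
  rw [Units.smul_def, smul_closedBall' u.ne_zero, smul_zero, mul_one, distribHaarChar_padic,
    volume_closedBall_one, mul_one] at hball
  refine distribHaarChar_eq_of_measure_smul_eq_mul (μ := volume) (s := boundedMatrices p 1)
    (by simp [volume_boundedMatrices_one]) (by simp [volume_boundedMatrices_one]) ?_
  rw [hsmul, volume_boundedMatrices, ← hball, volume_boundedMatrices_one, mul_one,
    ENNReal.coe_pow]

/-- `SL₂` is perfect, so it has no nontrivial characters into a commutative monoid. -/
theorem monoidHom_specialLinearGroup_eq_one {F M : Type*} [Field F] [CommMonoid M] {a : F}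
    (ha : a ≠ 0) (ha2 : a ^ 2 ≠ 1) (χ : SpecialLinearGroup (Fin 2) F →* M) : χ = 1 := by
  ext g
  have hmem : g ∈ commutator (SpecialLinearGroup (Fin 2) F) := by
    rw [SL2.commutator_eq_top ha ha2]
    trivial
  exact congrArg Units.val
    (MonoidHom.mem_ker.1 (Abelianization.commutator_subset_ker χ.toHomUnits hmem))

theorem monoidHom_generalLinearGroup_eq_of_det_eq {F M : Type*} [Field F] [CommMonoid M] {a : F}
    (ha : a ≠ 0) (ha2 : a ^ 2 ≠ 1) (χ : GL (Fin 2) F →* M) {g h : GL (Fin 2) F}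
    (hdet : g.det = h.det) : χ g = χ h := by
  have hdet1 : ((g * h⁻¹ : GL (Fin 2) F) : Matrix (Fin 2) (Fin 2) F).det = 1 := by
    rw [← GeneralLinearGroup.val_det_apply, map_mul, map_inv, hdet, mul_inv_cancel, Units.val_one]
  have hquot : χ (g * h⁻¹) = 1 := by
    rw [show g * h⁻¹ = SpecialLinearGroup.toGL ⟨_, hdet1⟩ from Units.ext rfl]
    exact DFunLike.congr_fun (monoidHom_specialLinearGroup_eq_one ha ha2
      (χ.comp SpecialLinearGroup.toGL)) ⟨_, hdet1⟩
  rw [← inv_mul_cancel_right g h, map_mul, hquot, one_mul]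

theorem distribHaarChar_mat (g : GL (Fin 2) ℚ_[p]) :
    distribHaarChar (Mat p) g = ‖(g : Mat p).det‖₊ ^ 2 := by
  have hdet : (g ^ 2).det = (GeneralLinearGroup.scalar (Fin 2) g.det).det := by
    rw [map_pow, GeneralLinearGroup.det_scalar, Fintype.card_fin]
  have hchar := monoidHom_generalLinearGroup_eq_of_det_eq (a := (2 : ℚ_[p])) two_ne_zero
    (by norm_num) (distribHaarChar (Mat p)) hdet
  rw [map_pow, distribHaarChar_mat_scalar, GeneralLinearGroup.val_det_apply,
    show 4 = 2 * 2 from rfl, pow_mul] at hchar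
  exact (pow_left_inj₀ zero_le zero_le two_ne_zero).1 hchar

theorem lintegral_eq_norm_det_mul {A : Mat p} (hA : A.det ≠ 0) {f : Mat p → ℝ≥0∞}
    (hf : Measurable f) :
    ∫⁻ B, f B = ENNReal.ofReal (‖A.det‖ ^ 2) * ∫⁻ N, f (A * N) := by
  set g : GL (Fin 2) ℚ_[p] := GeneralLinearGroup.mkOfDetNeZero A hA
  have hmap := distribHaarChar_smul_map (volume : Measure (Mat p)) g
  rw [distribHaarChar_mat] at hmap
  conv_lhs => rw [← hmap, lintegral_smul_measure, lintegral_map hf (measurable_const_smul g)]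
  rw [ENNReal.ofReal_pow (norm_nonneg _), ofReal_norm]
  rfl

/-! ### The zeta integral of `|det|^σ` -/

theorem exists_norm_eq_pi {ι : Type*} [Fintype ι] [Nonempty ι] (x : ι → ℚ_[p]) :
    ∃ a : ℚ_[p], ‖a‖ = ‖x‖ :=
  let ⟨i, hi⟩ := (IsGreatest.pi_norm x).1
  ⟨x i, hi⟩

theorem volume_closedBall_pi {ι : Type*} [Fintype ι] {r : ℝ} (hr : 0 ≤ r) :
    volume (closedBall (0 : ι → ℚ_[p]) r) =
      volume (closedBall (0 : ℚ_[p]) r) ^ Fintype.card ι := by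
  rw [closedBall_pi _ hr, volume_pi_pi]
  simp

theorem volume_closedBall_pi_inv_prime {ι : Type*} [Fintype ι] :
    volume (closedBall (0 : ι → ℚ_[p]) (p : ℝ)⁻¹) =
      (p : ℝ≥0∞)⁻¹ ^ Fintype.card ι * volume (closedBall (0 : ι → ℚ_[p]) 1) := by
  rw [volume_closedBall_pi (inv_nonneg.2 prime_cast_pos.le), volume_closedBall_pi zero_le_one,
    volume_closedBall_inv_prime, volume_closedBall_one, one_pow, mul_one]

theorem setLIntegral_closedBall_finTwo {E : Type*} [NormedAddCommGroup E] [MeasureSpace E]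
    [SigmaFinite (volume : Measure E)] {f : (Fin 2 → E) → ℝ≥0∞} (hf : Measurable f) :
    ∫⁻ x in closedBall (0 : Fin 2 → E) 1, f x =
      ∫⁻ a in closedBall (0 : E) 1, ∫⁻ b in closedBall (0 : E) 1, f ![a, b] := by
  have hpre : (MeasurableEquiv.finTwoArrow (α := E)).symm ⁻¹' closedBall 0 1 =
      closedBall (0 : E) 1 ×ˢ closedBall (0 : E) 1 := by
    ext z
    simp [pi_norm_le_iff_of_nonneg, MeasurableEquiv.finTwoArrow]
  rw [← (volume_preserving_finTwoArrow E).symm.setLIntegral_comp_preimage_emb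
    (MeasurableEquiv.measurableEmbedding _), hpre, Measure.volume_eq_prod,
    setLIntegral_prod (fun z => f (MeasurableEquiv.finTwoArrow.symm z))
      (hf.comp (MeasurableEquiv.measurable _)).aemeasurable]
  rfl

theorem setLIntegral_linearForm {x : Fin 2 → ℚ_[p]} (hx : ‖x‖ = 1) {f : ℚ_[p] → ℝ≥0∞}
    (hf : Measurable f) :
    ∫⁻ y in closedBall (0 : Fin 2 → ℚ_[p]) 1, f (x 0 * y 1 - x 1 * y 0) =
      ∫⁻ z in closedBall 0 1, f z := by
  have hmem (i : Fin 2) : ‖x i‖ ≤ 1 := hx ▸ norm_le_pi_norm x i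
  have hprod {y z : ℚ_[p]} (hy : ‖y‖ ≤ 1) (hz : z ∈ closedBall 0 1) : ‖y * z‖ ≤ 1 := by
    rw [norm_mul]
    exact mul_le_one₀ hy (norm_nonneg z) (mem_closedBall_zero_iff.1 hz)
  rw [setLIntegral_closedBall_finTwo (by fun_prop)]
  simp only [cons_val_zero, cons_val_one]
  rcases Fin.exists_fin_two.1 (IsGreatest.pi_norm x).1 with h0 | h1
  · have hinner : ∀ a ∈ closedBall (0 : ℚ_[p]) 1,
        ∫⁻ b in closedBall 0 1, f (x 0 * b - x 1 * a) = ∫⁻ z in closedBall 0 1, f z :=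
      fun a ha => by
        rw [← setLIntegral_closedBall_affine (t := -(x 1 * a)) (by simpa using hprod (hmem 1) ha)
          (h0.trans hx) hf]
        simp only [neg_add_eq_sub]
    rw [setLIntegral_congr_fun measurableSet_closedBall hinner, setLIntegral_const,
      volume_closedBall_one, mul_one]
  · have hinner : ∀ b ∈ closedBall (0 : ℚ_[p]) 1,
        ∫⁻ a in closedBall 0 1, f (x 0 * b - x 1 * a) = ∫⁻ z in closedBall 0 1, f z :=
      fun b hb => by
        rw [← setLIntegral_closedBall_affine (u := -x 1) (hprod (hmem 0) hb)
          ((norm_neg _).trans (h1.trans hx)) hf]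
        simp only [neg_mul, ← sub_eq_add_neg]
    rw [lintegral_lintegral_swap (by fun_prop),
      setLIntegral_congr_fun measurableSet_closedBall hinner, setLIntegral_const,
      volume_closedBall_one, mul_one]

theorem setLIntegral_boundedMatrices {f : Mat p → ℝ≥0∞} (hf : Measurable f) :
    ∫⁻ A in boundedMatrices p 1, f A =
      ∫⁻ x in closedBall (0 : Fin 2 → ℚ_[p]) 1, ∫⁻ y in closedBall (0 : Fin 2 → ℚ_[p]) 1,
        f (of ![x, y]) := by
  have hset : boundedMatrices p 1 = closedBall (0 : Fin 2 → Fin 2 → ℚ_[p]) 1 := by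
    rw [closedBall_pi _ zero_le_one]
    simp only [Pi.zero_apply, closedBall_pi _ zero_le_one, boundedMatrices_eq_pi]
    rfl
  rw [hset]
  exact setLIntegral_closedBall_finTwo hf

theorem inv_prime_rpow_lt_one {σ : ℝ} (hσ : 0 < σ) : (p : ℝ)⁻¹ ^ σ < 1 :=
  Real.rpow_lt_one (inv_nonneg.2 prime_cast_pos.le) inv_prime_lt_one hσ

theorem norm_prime_pow_rpow (c : ℕ) (σ : ℝ) : ‖(p : ℚ_[p]) ^ c‖ ^ σ = ((p : ℝ)⁻¹ ^ σ) ^ c := by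
  rw [norm_pow, Padic.norm_p, Real.rpow_pow_comm (inv_nonneg.2 prime_cast_pos.le)]

/-- The zeta integral of `|z|^σ` over `ℤ_p`. -/
noncomputable def normZeta (q : ℕ) (σ : ℝ) : ℝ := (1 - (q : ℝ)⁻¹) / (1 - (q : ℝ)⁻¹ * (q : ℝ)⁻¹ ^ σ)

theorem normZeta_nonneg {σ : ℝ} (hσ : 0 < σ) : 0 ≤ normZeta p σ :=
  div_nonneg (sub_nonneg.2 inv_prime_lt_one.le) <| sub_nonneg.2 <| mul_le_one₀ inv_prime_lt_one.le
    (Real.rpow_nonneg (inv_nonneg.2 prime_cast_pos.le) σ) (inv_prime_rpow_lt_one hσ).le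

theorem setLIntegral_norm_rpow {σ : ℝ} (hσ : 0 < σ) :
    ∫⁻ z in closedBall (0 : ℚ_[p]) 1, ENNReal.ofReal (‖z‖ ^ σ) =
      ENNReal.ofReal (normZeta p σ) := by
  rw [setLIntegral_closedBall_one_of_homogeneous (r := (p : ℝ)⁻¹ ^ σ) (C := 1)
    (fun x => ⟨x, rfl⟩) volume_closedBall_inv_prime_eq_pow_mul volume_closedBall_one
    (by fun_prop) (by simp [hσ.ne']) (Real.rpow_nonneg (inv_nonneg.2 prime_cast_pos.le) σ)
    (inv_prime_rpow_lt_one hσ) zero_le_one, one_mul, pow_one, normZeta]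
  intro c x hx
  rw [smul_eq_mul, norm_mul, mem_sphere_zero_iff_norm.1 hx, mul_one, mul_one, norm_prime_pow_rpow]

/-- The zeta integral of `|det|^σ` over `M₂(ℤ_p)`. -/
noncomputable def detZeta (q : ℕ) (σ : ℝ) : ℝ :=
  normZeta q σ * ((1 - (q : ℝ)⁻¹ ^ 2) / (1 - (q : ℝ)⁻¹ ^ 2 * (q : ℝ)⁻¹ ^ σ))

theorem detZeta_nonneg {σ : ℝ} (hσ : 0 < σ) : 0 ≤ detZeta p σ := by
  have hr0 := inv_nonneg.2 (prime_cast_pos (p := p)).le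
  have hr2 : (p : ℝ)⁻¹ ^ 2 ≤ 1 := pow_le_one₀ hr0 inv_prime_lt_one.le
  exact mul_nonneg (normZeta_nonneg hσ) <| div_nonneg (sub_nonneg.2 hr2) <| sub_nonneg.2 <|
    mul_le_one₀ hr2 (Real.rpow_nonneg hr0 σ) (inv_prime_rpow_lt_one hσ).le

theorem setLIntegral_norm_det_rpow {σ : ℝ} (hσ : 0 < σ) :
    ∫⁻ A in boundedMatrices p 1, ENNReal.ofReal (‖A.det‖ ^ σ) =
      ENNReal.ofReal (detZeta p σ) := by
  have hmeas : Measurable fun A : Mat p => ENNReal.ofReal (‖A.det‖ ^ σ) :=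
    (Continuous.matrix_det continuous_id).measurable.norm.pow_const σ |>.ennreal_ofReal
  have hdet (x y : Fin 2 → ℚ_[p]) : (of ![x, y]).det = x 0 * y 1 - x 1 * y 0 := det_fin_two _
  rw [setLIntegral_boundedMatrices hmeas]
  simp only [hdet]
  refine setLIntegral_closedBall_one_of_homogeneous (r := (p : ℝ)⁻¹ ^ σ) exists_norm_eq_pi
    volume_closedBall_pi_inv_prime ?_ ?_ ?_
    (Real.rpow_nonneg (inv_nonneg.2 prime_cast_pos.le) σ) (inv_prime_rpow_lt_one hσ)
    (normZeta_nonneg hσ) fun c x hx => ?_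
  · rw [volume_closedBall_pi zero_le_one, volume_closedBall_one, one_pow]
  · exact Measurable.lintegral_prod_right' (f := fun z : (Fin 2 → ℚ_[p]) × (Fin 2 → ℚ_[p]) =>
      ENNReal.ofReal (‖z.1 0 * z.2 1 - z.1 1 * z.2 0‖ ^ σ)) (by fun_prop)
  · simp [hσ.ne']
  · have hterm (y : Fin 2 → ℚ_[p]) : ENNReal.ofReal
        (‖((p : ℚ_[p]) ^ c • x) 0 * y 1 - ((p : ℚ_[p]) ^ c • x) 1 * y 0‖ ^ σ) =
          ENNReal.ofReal (((p : ℝ)⁻¹ ^ σ) ^ c) *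
            ENNReal.ofReal (‖x 0 * y 1 - x 1 * y 0‖ ^ σ) := by
      rw [Pi.smul_apply, Pi.smul_apply, smul_mul_assoc, smul_mul_assoc, ← smul_sub, norm_smul,
        Real.mul_rpow (norm_nonneg _) (norm_nonneg _), norm_prime_pow_rpow,
        ENNReal.ofReal_mul (by positivity)]
    simp only [hterm]
    rw [lintegral_const_mul _ (by fun_prop),
      setLIntegral_linearForm (f := fun z => ENNReal.ofReal (‖z‖ ^ σ))
        (mem_sphere_zero_iff_norm.1 hx) (by fun_prop), setLIntegral_norm_rpow hσ,
      ENNReal.ofReal_mul (by positivity)]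

/-! ### Pairs of matrices and the maps `F₁`, `F₂` -/

theorem mcoord_eq_norm (x : QForm p) : mcoord x = ‖x‖ := max_assoc _ _ _

theorem Pq_eq_disc_Fmap1 (v : VV p) : Pq v = disc (Fmap1 v) := by
  simp only [Pq, Fmap1, disc, det_fin_two, adjugate_fin_two, Matrix.sub_apply, Matrix.mul_apply,
    Fin.sum_univ_two, of_apply, cons_val_zero, cons_val_one, cons_val']
  ring

theorem Pq_eq_disc_Fmap2 (v : VV p) : Pq v = disc (Fmap2 v) := by
  rw [Pq_eq_disc_Fmap1]
  simp only [Fmap1, Fmap2, disc]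
  ring

@[fun_prop]
theorem continuous_entry_fst (i j : Fin 2) : Continuous fun v : VV p => v.1 i j :=
  continuous_fst.matrix_elem i j

@[fun_prop]
theorem continuous_entry_snd (i j : Fin 2) : Continuous fun v : VV p => v.2 i j :=
  continuous_snd.matrix_elem i j

@[fun_prop]
theorem continuous_Fmap1 : Continuous (Fmap1 : VV p → QForm p) := by
  unfold Fmap1
  fun_prop

@[fun_prop]
theorem continuous_Fmap2 : Continuous (Fmap2 : VV p → QForm p) := by
  unfold Fmap2
  fun_prop

@[fun_prop]
theorem continuous_Pq : Continuous (Pq : VV p → ℚ_[p]) := by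
  simp only [funext Pq_eq_disc_Fmap1]
  fun_prop

@[fun_prop]
theorem measurable_Fmap1 : Measurable (Fmap1 : VV p → QForm p) :=
  continuous_Fmap1.measurable

@[fun_prop]
theorem measurable_Fmap2 : Measurable (Fmap2 : VV p → QForm p) :=
  continuous_Fmap2.measurable

@[fun_prop]
theorem measurable_Pq : Measurable (Pq : VV p → ℚ_[p]) :=
  continuous_Pq.measurable

/-- The lattice `M₂(ℤ_p) × M₂(ℤ_p)`. -/
def integralPairs (p : ℕ) [Fact p.Prime] : Set (VV p) := boundedMatrices p 1 ×ˢ boundedMatrices p 1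

theorem measurableSet_integralPairs : MeasurableSet (integralPairs p) :=
  (measurableSet_boundedMatrices 1).prod (measurableSet_boundedMatrices 1)

theorem volume_integralPairs : volume (integralPairs p) = 1 := by
  rw [integralPairs, Measure.volume_eq_prod, Measure.prod_prod, volume_boundedMatrices_one, one_mul]

theorem eq_volume_of_integralPairs {μ : Measure (VV p)} [μ.IsAddHaarMeasure]
    (hμ : μ (integralPairs p) = 1) : μ = volume := by
  have h := measurePreserving_of_measure_preimage_eq (μ := μ) (ν := volume)
    (ContinuousAddEquiv.refl (VV p)) measurableSet_integralPairs
    (by simp [volume_integralPairs]) (by simp [volume_integralPairs])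
    (hμ.trans volume_integralPairs.symm)
  simpa using h.map_eq

theorem measurePreserving_of_involutive {G : Type*} [AddGroup G] [TopologicalSpace G]
    [IsTopologicalAddGroup G] [LocallyCompactSpace G] [SecondCountableTopology G]
    [MeasurableSpace G] [BorelSpace G] {μ : Measure G} [μ.IsAddHaarMeasure] {f : G → G}
    (hadd : ∀ x y, f (x + y) = f x + f y) (hf : Continuous f) (hinv : Function.Involutive f)
    {K : Set G} (hK : MeasurableSet K) (h0 : μ K ≠ 0) (htop : μ K ≠ ∞) (hfK : MapsTo f K K) :
    MeasurePreserving f μ μ := by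
  let e : G ≃ₜ+ G :=
    { hinv.toPerm with map_add' := hadd, continuous_toFun := hf, continuous_invFun := hf }
  have hpre : f ⁻¹' K = K :=
    Subset.antisymm (fun x hx => hinv x ▸ hfK hx) hfK
  exact measurePreserving_of_measure_preimage_eq e hK h0 htop (congrArg μ hpre)

/-- Regroups the rows of `(x, y)`, sending it to the matrix of first rows and the matrix of second
rows. The coordinates of `F₁` are then determinants of, and between, the two new matrices. -/
def rowExchange (v : VV p) : VV p := (of ![v.1 0, v.2 0], of ![v.1 1, v.2 1])

theorem rowExchange_involutive : Function.Involutive (rowExchange (p := p)) := by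
  rintro ⟨A, B⟩
  ext i j <;> fin_cases i <;> rfl

theorem rowExchange_mem_integralPairs {v : VV p} :
    rowExchange v ∈ integralPairs p ↔ v ∈ integralPairs p := by
  simp only [integralPairs, mem_prod, boundedMatrices, mem_ofPred_eq, rowExchange,
    Fin.forall_fin_two, of_apply, cons_val_zero, cons_val_one]
  tauto

theorem continuous_rowExchange : Continuous (rowExchange (p := p)) := by
  refine .prodMk (continuous_matrix fun i j => ?_) (continuous_matrix fun i j => ?_) <;>
    fin_cases i
  exacts [continuous_entry_fst 0 j, continuous_entry_snd 0 j, continuous_entry_fst 1 j,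
    continuous_entry_snd 1 j]

theorem measurePreserving_rowExchange : MeasurePreserving (rowExchange (p := p)) := by
  refine measurePreserving_of_involutive (fun v w => ?_) continuous_rowExchange
    rowExchange_involutive measurableSet_integralPairs (by simp [volume_integralPairs])
    (by simp [volume_integralPairs]) fun v => rowExchange_mem_integralPairs.2
  ext i j <;> fin_cases i <;> rfl

theorem measurePreserving_transpose : MeasurePreserving (transpose : Mat p → Mat p) :=
  measurePreserving_of_involutive transpose_add continuous_id.matrix_transpose transpose_transpose
    (measurableSet_boundedMatrices 1) (by simp [volume_boundedMatrices_one])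
    (by simp [volume_boundedMatrices_one]) fun _ hA i j => hA j i

theorem measurePreserving_submatrix_rev :
    MeasurePreserving fun A : Mat p => A.submatrix Fin.rev id :=
  measurePreserving_of_involutive (fun _ _ => rfl) (continuous_id.matrix_submatrix _ _)
    (fun A => Matrix.ext fun i j => congrArg (A · j) (Fin.rev_rev i))
    (measurableSet_boundedMatrices 1) (by simp [volume_boundedMatrices_one])
    (by simp [volume_boundedMatrices_one]) fun _ hA i j => hA i.rev j

/-- The symmetry of `V` transposing both matrices, which exchanges `F₁` and `F₂`. -/
def transposePair (v : VV p) : VV p := (v.1ᵀ, v.2ᵀ)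

/-- The symmetry of `V` swapping the rows of both matrices, which exchanges the outer coefficients
of `F₁`. -/
def swapRows (v : VV p) : VV p := (v.1.submatrix Fin.rev id, v.2.submatrix Fin.rev id)

theorem measurePreserving_transposePair : MeasurePreserving (transposePair (p := p)) :=
  measurePreserving_transpose.prod measurePreserving_transpose

theorem measurePreserving_swapRows : MeasurePreserving (swapRows (p := p)) :=
  measurePreserving_submatrix_rev.prod measurePreserving_submatrix_rev

theorem transposePair_mem_integralPairs {v : VV p} :
    transposePair v ∈ integralPairs p ↔ v ∈ integralPairs p := by
  simp only [integralPairs, mem_prod, boundedMatrices, mem_ofPred_eq, transposePair,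
    transpose_apply]
  exact and_congr forall_comm forall_comm

theorem swapRows_mem_integralPairs {v : VV p} :
    swapRows v ∈ integralPairs p ↔ v ∈ integralPairs p := by
  simp only [integralPairs, mem_prod, boundedMatrices, mem_ofPred_eq, swapRows, submatrix_apply, id]
  exact and_congr (Fin.rev_surjective.forall (p := fun i => ∀ j, ‖v.1 i j‖ ≤ 1)).symm
    (Fin.rev_surjective.forall (p := fun i => ∀ j, ‖v.2 i j‖ ≤ 1)).symm

theorem Fmap1_transposePair (v : VV p) : Fmap1 (transposePair v) = Fmap2 v := by
  simp only [Fmap1, Fmap2, transposePair, transpose_apply, Prod.mk.injEq]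
  refine ⟨?_, ?_, ?_⟩ <;> ring

theorem Fmap2_transposePair (v : VV p) : Fmap2 (transposePair v) = Fmap1 v := by
  simp only [Fmap1, Fmap2, transposePair, transpose_apply, Prod.mk.injEq]
  refine ⟨?_, ?_, ?_⟩ <;> ring

theorem Fmap1_swapRows (v : VV p) :
    Fmap1 (swapRows v) = ((Fmap1 v).2.2, (Fmap1 v).2.1, (Fmap1 v).1) :=
  Prod.ext rfl (Prod.ext (add_comm _ _) rfl)

theorem Fmap2_swapRows (v : VV p) : Fmap2 (swapRows v) = -Fmap2 v := by
  simp only [Fmap2, swapRows, submatrix_apply, id, show Fin.rev (0 : Fin 2) = 1 from rfl,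
    show Fin.rev (1 : Fin 2) = 0 from rfl, Prod.neg_mk, Prod.mk.injEq]
  refine ⟨?_, ?_, ?_⟩ <;> ring

/-- The form attached to `N`, whose roots are the fixed points of the Möbius transformation `N`. -/
noncomputable def fixedPointForm (N : Mat p) : QForm p := (N 1 0, N 1 1 - N 0 0, -N 0 1)

theorem Fmap1_rowExchange_mul (A N : Mat p) :
    Fmap1 (rowExchange (A, A * N)) = A.det • (1, N.trace, N.det) := by
  simp only [Fmap1, rowExchange, of_apply, cons_val_zero, cons_val_one, Matrix.mul_apply,
    Fin.sum_univ_two, det_fin_two, trace_fin_two, Prod.smul_mk, smul_eq_mul, Prod.mk.injEq]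
  refine ⟨?_, ?_, ?_⟩ <;> ring

theorem Fmap2_rowExchange_mul (A N : Mat p) :
    Fmap2 (rowExchange (A, A * N)) = A.det • fixedPointForm N := by
  simp only [Fmap2, rowExchange, of_apply, cons_val_zero, cons_val_one, Matrix.mul_apply,
    Fin.sum_univ_two, det_fin_two, fixedPointForm, Prod.smul_mk, smul_eq_mul, Prod.mk.injEq]
  refine ⟨?_, ?_, ?_⟩ <;> ring

theorem disc_fixedPointForm (N : Mat p) : disc (fixedPointForm N) = disc (1, N.trace, N.det) := by
  simp only [disc, fixedPointForm, trace_fin_two, det_fin_two]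
  ring

/-- The splitting of `M₂(ℚ_p)` into trace and trace-free part. -/
noncomputable def traceSplit (p : ℕ) [Fact p.Prime] : Mat p ≃ₜ+ ℚ_[p] × QForm p where
  toFun N := (N.trace, fixedPointForm N)
  invFun z := !![(z.1 - z.2.2.1) / 2, -z.2.2.2; z.2.1, (z.1 + z.2.2.1) / 2]
  left_inv N := by
    ext i j
    fin_cases i <;> fin_cases j <;> simp [fixedPointForm, trace_fin_two] <;> ring
  right_inv z := by
    simp only [fixedPointForm, trace_fin_two, of_apply, cons_val_zero, cons_val_one, cons_val',
      cons_val_fin_one, neg_neg]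
    ring_nf
  map_add' M N := by
    simp only [fixedPointForm, trace_add, Matrix.add_apply, Prod.mk_add_mk, Prod.mk.injEq,
      true_and]
    constructor <;> ring
  continuous_toFun := by
    unfold fixedPointForm
    fun_prop
  continuous_invFun := by
    fun_prop

theorem norm_traceSplit_le_one_iff (hp : Odd p) {N : Mat p} :
    ‖traceSplit p N‖ ≤ 1 ↔ N ∈ boundedMatrices p 1 := by
  have hdouble {x y : ℚ_[p]} (hx : ‖x‖ ≤ 1) (hxy : ‖2 * y - x‖ ≤ 1) : ‖y‖ ≤ 1 := by
    have h := (IsUltrametricDist.norm_add_le_max x (2 * y - x)).trans (max_le hx hxy)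
    rwa [add_sub_cancel, norm_mul, norm_two hp, one_mul] at h
  change max ‖N.trace‖ ‖fixedPointForm N‖ ≤ 1 ↔ ∀ i j, ‖N i j‖ ≤ 1
  simp only [fixedPointForm, Prod.norm_mk, max_le_iff, Fin.forall_fin_two, norm_neg, trace_fin_two]
  constructor
  · rintro ⟨htr, h10, hsub, h01⟩
    refine ⟨⟨hdouble htr ?_, h01⟩, h10, hdouble htr ?_⟩
    · rwa [two_mul, add_sub_add_left_eq_sub, norm_sub_rev]
    · rwa [two_mul, add_sub_add_right_eq_sub]
  · rintro ⟨⟨h00, h01⟩, h10, h11⟩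
    exact ⟨(IsUltrametricDist.norm_add_le_max _ _).trans (max_le h00 h11), h10,
      (norm_sub_le_max _ _).trans (max_le h11 h00), h01⟩

theorem measurePreserving_traceSplit (hp : Odd p) : MeasurePreserving (traceSplit p) := by
  have hpre : traceSplit p ⁻¹' closedBall 0 1 = boundedMatrices p 1 := by
    ext N
    rw [mem_preimage, mem_closedBall_zero_iff, norm_traceSplit_le_one_iff hp]
  have hvol : volume (closedBall (0 : ℚ_[p] × QForm p) 1) = 1 := by
    simp only [volume_closedBall_prod, volume_closedBall_one, mul_one]
  have : (volume : Measure (ℚ_[p] × QForm p)).IsAddHaarMeasure := isAddHaarMeasure_volume_prod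
  exact measurePreserving_of_measure_preimage_eq (traceSplit p) measurableSet_closedBall
    (by rw [hvol]; exact one_ne_zero)
    (by rw [hvol]; exact ENNReal.one_ne_top) (by rw [hpre, hvol, volume_boundedMatrices_one])

/-! ### The chart `(A, N) ↦ (A, A N)` and the dominant region -/

theorem lintegral_eq_lintegral_rowExchange_mul {F : VV p → ℝ≥0∞} (hF : Measurable F)
    (hF0 : ∀ v, (Fmap1 v).1 = 0 → F v = 0) :
    ∫⁻ v, F v = ∫⁻ A, ENNReal.ofReal (‖A.det‖ ^ 2) * ∫⁻ N, F (rowExchange (A, A * N)) := by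
  have hFr : Measurable (F ∘ rowExchange) := hF.comp measurePreserving_rowExchange.measurable
  rw [← measurePreserving_rowExchange.lintegral_comp hF]
  refine (lintegral_prod (F ∘ rowExchange) hFr.aemeasurable).trans ?_
  refine lintegral_congr fun A => ?_
  by_cases hA : A.det = 0
  · have hzero (B : Mat p) : F (rowExchange (A, B)) = 0 :=
      hF0 _ ((det_fin_two A).symm.trans hA)
    simp only [Function.comp_apply, hzero, lintegral_zero, mul_zero]
  · exact lintegral_eq_norm_det_mul hA (hFr.comp measurable_prodMk_left)

/-- The pairs in the lattice for which the leading coefficient of `F₁` dominates all coefficients of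
`F₁` and `F₂`. -/
def dominantPairs (p : ℕ) [Fact p.Prime] : Set (VV p) :=
  {v ∈ integralPairs p | ‖(Fmap1 v).1‖ = ‖Fmap1 v‖ ∧ ‖Fmap2 v‖ ≤ ‖Fmap1 v‖}

theorem measurableSet_dominantPairs : MeasurableSet (dominantPairs p) :=
  have h1 := measurable_Fmap1 (p := p)
  measurableSet_integralPairs.inter <|
    (measurableSet_eq_fun h1.fst.norm h1.norm).inter
      (measurableSet_le measurable_Fmap2.norm h1.norm)

theorem norm_det_le_one {N : Mat p} (hN : N ∈ boundedMatrices p 1) : ‖N.det‖ ≤ 1 := by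
  rw [det_fin_two]
  refine (norm_sub_le_max _ _).trans (max_le ?_ ?_) <;> rw [norm_mul]
  exacts [mul_le_one₀ (hN _ _) (norm_nonneg _) (hN _ _),
    mul_le_one₀ (hN _ _) (norm_nonneg _) (hN _ _)]

theorem mul_mem_boundedMatrices_one {A N : Mat p} (hA : A ∈ boundedMatrices p 1)
    (hN : N ∈ boundedMatrices p 1) : A * N ∈ boundedMatrices p 1 := by
  intro i j
  rw [Matrix.mul_apply, Fin.sum_univ_two]
  refine (IsUltrametricDist.norm_add_le_max _ _).trans (max_le ?_ ?_) <;> rw [norm_mul]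
  exacts [mul_le_one₀ (hA _ _) (norm_nonneg _) (hN _ _),
    mul_le_one₀ (hA _ _) (norm_nonneg _) (hN _ _)]

theorem norm_one_trace_det_of_mem (hp : Odd p) {N : Mat p} (hN : N ∈ boundedMatrices p 1) :
    ‖((1, N.trace, N.det) : QForm p)‖ = 1 := by
  have htr : ‖N.trace‖ ≤ 1 := (norm_fst_le _).trans ((norm_traceSplit_le_one_iff hp).2 hN)
  rw [Prod.norm_mk, Prod.norm_mk, norm_one, max_eq_left (max_le htr (norm_det_le_one hN))]

theorem rowExchange_mul_mem_dominantPairs (hp : Odd p) {A N : Mat p} (hA : A.det ≠ 0) :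
    rowExchange (A, A * N) ∈ dominantPairs p ↔
      A ∈ boundedMatrices p 1 ∧ N ∈ boundedMatrices p 1 := by
  have hpos : 0 < ‖A.det‖ := norm_pos_iff.2 hA
  simp only [dominantPairs, mem_sep_iff, rowExchange_mem_integralPairs, Fmap1_rowExchange_mul,
    Fmap2_rowExchange_mul, norm_smul]
  constructor
  · rintro ⟨hint, hlead, hle⟩
    have hone : ‖((1, N.trace, N.det) : QForm p)‖ = 1 := by
      simpa [hpos.ne'] using hlead.symm
    rw [hone] at hle
    refine ⟨hint.1, (norm_traceSplit_le_one_iff hp).1 (max_le ?_ (le_of_mul_le_mul_left hle hpos))⟩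
    rw [← hone]
    exact (norm_fst_le (N.trace, N.det)).trans (norm_snd_le ((1, N.trace, N.det) : QForm p))
  · rintro ⟨hA1, hN⟩
    refine ⟨⟨hA1, mul_mem_boundedMatrices_one hA1 hN⟩, ?_⟩
    rw [norm_one_trace_det_of_mem hp hN]
    refine ⟨by simp, mul_le_mul_of_nonneg_left ?_ hpos.le⟩
    exact (norm_snd_le _).trans ((norm_traceSplit_le_one_iff hp).2 hN)

section PairWeight

variable {w : ℕ → ℕ → ℝ≥0∞} {s : ℝ} {d : ℚ_[p]}

/-- The weight `levelWeight` of a pair of matrices. -/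
noncomputable def pairWeight (w : ℕ → ℕ → ℝ≥0∞) (s : ℝ) (d : ℚ_[p]) (v : VV p) : ℝ≥0∞ :=
  levelWeight w s d (Pq v) ‖Fmap1 v‖ ‖Fmap2 v‖

theorem measurable_pairWeight (hd : d ≠ 0) : Measurable (pairWeight w s d) :=
  measurable_levelWeight hd (by fun_prop) (by fun_prop) (by fun_prop)

theorem pairWeight_rowExchange_mul (hp : Odd p) {A N : Mat p} (hA : A.det ≠ 0)
    (hN : N ∈ boundedMatrices p 1) :
    pairWeight w s d (rowExchange (A, A * N)) =
      ENNReal.ofReal (‖A.det‖ ^ (2 * (s - 2))) * formWeight w s d (fixedPointForm N) := by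
  rw [pairWeight, Pq_eq_disc_Fmap2, Fmap1_rowExchange_mul, Fmap2_rowExchange_mul, disc_smul,
    norm_smul, norm_smul, norm_one_trace_det_of_mem hp hN, levelWeight_sq_mul hA, formWeight]

theorem indicator_pairWeight_rowExchange_mul (hp : Odd p) (hs : 1 < s) {S : Set (VV p)}
    {Z : Set (ℚ_[p] × QForm p)} (hZ : Z ⊆ closedBall 0 1)
    (hSZ : ∀ A N : Mat p, A.det ≠ 0 → N ∈ boundedMatrices p 1 →
      disc (fixedPointForm N) ∈ squareClass d →
        (rowExchange (A, A * N) ∈ S ↔ traceSplit p N ∈ Z)) (A N : Mat p) :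
    ENNReal.ofReal (‖A.det‖ ^ 2) *
        (dominantPairs p ∩ S).indicator (pairWeight w s d) (rowExchange (A, A * N)) =
      (boundedMatrices p 1).indicator (fun A => ENNReal.ofReal (‖A.det‖ ^ (2 * s - 2))) A *
        Z.indicator (fun z => formWeight w s d z.2) (traceSplit p N) := by
  by_cases hA : A.det = 0
  · have hexp : 2 * s - 2 ≠ 0 := by linarith
    simp [hA, Real.zero_rpow hexp]
  have hdom := rowExchange_mul_mem_dominantPairs hp (N := N) hA
  by_cases hA1 : A ∈ boundedMatrices p 1
  swap
  · rw [indicator_of_notMem (fun h => hA1 (hdom.1 h.1).1), indicator_of_notMem hA1, mul_zero,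
      zero_mul]
  by_cases hN : N ∈ boundedMatrices p 1
  swap
  · rw [indicator_of_notMem (fun h => hN (hdom.1 h.1).2), indicator_of_notMem (fun h => hN
      ((norm_traceSplit_le_one_iff hp).1 (mem_closedBall_zero_iff.1 (hZ h)))), mul_zero, mul_zero]
  have hweight : pairWeight w s d (rowExchange (A, A * N)) =
      ENNReal.ofReal (‖A.det‖ ^ (2 * (s - 2))) * formWeight w s d (traceSplit p N).2 :=
    pairWeight_rowExchange_mul hp hA hN
  by_cases hdisc : disc (fixedPointForm N) ∈ squareClass d
  swap
  · have hzero : formWeight w s d (traceSplit p N).2 = 0 := levelWeight_of_notMem hdisc _ _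
    have hright : Z.indicator (fun z => formWeight w s d z.2) (traceSplit p N) = 0 :=
      indicator_apply_eq_zero.2 fun _ => hzero
    rw [hzero, mul_zero] at hweight
    rw [indicator_apply_eq_zero.2 fun _ => hweight, hright, mul_zero, mul_zero]
  have hmem : rowExchange (A, A * N) ∈ dominantPairs p ∩ S ↔ traceSplit p N ∈ Z :=
    (and_iff_right (hdom.2 ⟨hA1, hN⟩)).trans (hSZ A N hA hN hdisc)
  by_cases hmemZ : traceSplit p N ∈ Z
  · have hpow : ‖A.det‖ ^ (2 * s - 2) = ‖A.det‖ ^ 2 * ‖A.det‖ ^ (2 * (s - 2)) := by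
      rw [← Real.rpow_two, ← Real.rpow_add (norm_pos_iff.2 hA)]
      ring_nf
    rw [indicator_of_mem (hmem.2 hmemZ), indicator_of_mem hA1, indicator_of_mem hmemZ, hweight,
      hpow, ENNReal.ofReal_mul (by positivity), mul_assoc]
  · rw [indicator_of_notMem (hmem.not.2 hmemZ), indicator_of_notMem hmemZ, mul_zero, mul_zero]

theorem pairWeight_eq_zero_of_dominantPairs (hd : d ≠ 0) {v : VV p} (hv : v ∈ dominantPairs p)
    (h0 : (Fmap1 v).1 = 0) : pairWeight w s d v = 0 := by
  have hF : Fmap1 v = 0 := by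
    rw [← norm_eq_zero, ← hv.2.1, h0, norm_zero]
  rw [pairWeight, Pq_eq_disc_Fmap1, hF, show disc (0 : QForm p) = 0 by simp [disc],
    levelWeight_zero hd]

theorem setLIntegral_dominantPairs_inter (hp : Odd p) (hs : 1 < s) (hd : d ≠ 0) {S : Set (VV p)}
    (hS : MeasurableSet S) {Z : Set (ℚ_[p] × QForm p)} (hZm : MeasurableSet Z)
    (hZ : Z ⊆ closedBall 0 1)
    (hSZ : ∀ A N : Mat p, A.det ≠ 0 → N ∈ boundedMatrices p 1 →
      disc (fixedPointForm N) ∈ squareClass d →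
        (rowExchange (A, A * N) ∈ S ↔ traceSplit p N ∈ Z)) :
    ∫⁻ v in dominantPairs p ∩ S, pairWeight w s d v =
      ENNReal.ofReal (detZeta p (2 * s - 2)) * ∫⁻ z in Z, formWeight w s d z.2 := by
  have hmS := measurableSet_dominantPairs.inter hS
  have hm := (measurable_pairWeight (w := w) (s := s) hd).indicator hmS
  have hmZ : Measurable (Z.indicator fun z => formWeight w s d z.2) :=
    ((measurable_formWeight hd).comp measurable_snd).indicator hZm
  have hmsplit := measurePreserving_traceSplit (p := p) hp
  have hmdet : Measurable fun A : Mat p => ENNReal.ofReal (‖A.det‖ ^ (2 * s - 2)) :=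
    (Continuous.matrix_det continuous_id).measurable.norm.pow_const _ |>.ennreal_ofReal
  rw [← lintegral_indicator hmS, lintegral_eq_lintegral_rowExchange_mul hm fun v hv => ?_]
  · have hinner (A : Mat p) : ENNReal.ofReal (‖A.det‖ ^ 2) *
          ∫⁻ N, (dominantPairs p ∩ S).indicator (pairWeight w s d) (rowExchange (A, A * N)) =
        (boundedMatrices p 1).indicator (fun A => ENNReal.ofReal (‖A.det‖ ^ (2 * s - 2))) A *
          ∫⁻ z in Z, formWeight w s d z.2 := by
      rw [← lintegral_const_mul' _ _ ENNReal.ofReal_ne_top, ← lintegral_indicator hZm,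
        ← hmsplit.lintegral_comp hmZ]
      refine (lintegral_congr fun N =>
        indicator_pairWeight_rowExchange_mul hp hs hZ hSZ A N).trans ?_
      exact lintegral_const_mul _ (hmZ.comp hmsplit.measurable)
    rw [lintegral_congr hinner, lintegral_mul_const _ (hmdet.indicator
      (measurableSet_boundedMatrices 1)), lintegral_indicator (measurableSet_boundedMatrices 1),
      setLIntegral_norm_det_rpow (by linarith)]
  · rw [indicator_apply_eq_zero]
    exact fun hmem => pairWeight_eq_zero_of_dominantPairs hd hmem.1 hv

end PairWeight

/-! ### Decomposition of the lattice into dominant regions -/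

section Decomposition

variable {w : ℕ → ℕ → ℝ≥0∞} {s : ℝ} {d : ℚ_[p]}

theorem norm_disc_lt_one_of_mem_squareClass (hd : ‖d‖ = (p : ℝ)⁻¹) {x : QForm p} (hx : ‖x‖ ≤ 1)
    (hmem : disc x ∈ squareClass d) : ‖disc x‖ < 1 :=
  (norm_disc_le_one hx).lt_of_ne fun h => notMem_squareClass_of_norm_eq_one hd h hmem

theorem norm_fst_eq_or_norm_snd_snd_eq (hp : Odd p) (hd : ‖d‖ = (p : ℝ)⁻¹) {x : QForm p}
    (hmem : disc x ∈ squareClass d) : ‖x.1‖ = ‖x‖ ∨ ‖x.2.2‖ = ‖x‖ := by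
  obtain ⟨a, ha⟩ := exists_norm_eq_qForm x
  by_cases ha0 : a = 0
  · have hx : x = 0 := by rw [← norm_eq_zero, ← ha, ha0, norm_zero]
    simp [hx]
  have hpos : 0 < ‖x‖ := ha ▸ norm_pos_iff.2 ha0
  set y := a⁻¹ • x with hy
  have hy1 : ‖y‖ = 1 := by rw [norm_smul, norm_inv, ha, inv_mul_cancel₀ hpos.ne']
  have hmid := norm_mid_lt_one_iff hp hy1.le <| norm_disc_lt_one_of_mem_squareClass hd hy1.le <| by
    rwa [disc_smul, sq_mul_mem_squareClass_iff (inv_ne_zero ha0)]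
  have houter : ¬ (‖y.1‖ < 1 ∧ ‖y.2.2‖ < 1) := fun h => by
    refine hy1.not_lt ?_
    simpa [Prod.norm_def, hmid, h.1] using h.2
  have hscale (z : ℚ_[p]) : ‖a⁻¹ * z‖ < 1 ↔ ‖z‖ < ‖x‖ := by
    rw [norm_mul, norm_inv, ha, inv_mul_lt_one₀ hpos]
  simp only [hy, Prod.smul_fst, Prod.smul_snd, smul_eq_mul, hscale] at houter
  have h1 : ‖x.1‖ ≤ ‖x‖ := norm_fst_le x
  have h2 : ‖x.2.2‖ ≤ ‖x‖ := (norm_snd_le x.2).trans (norm_snd_le x)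
  by_contra! h
  exact houter ⟨h1.lt_of_ne h.1, h2.lt_of_ne h.2⟩

/-- The pairs for which the last coefficient of `F₁` is not dominant in `F₁`. -/
def lastSmall (p : ℕ) [Fact p.Prime] : Set (VV p) := {v | ‖(Fmap1 v).2.2‖ < ‖Fmap1 v‖}

/-- The pairs for which `F₂` has smaller content than `F₁`. -/
def secondSmall (p : ℕ) [Fact p.Prime] : Set (VV p) := {v | ‖Fmap2 v‖ < ‖Fmap1 v‖}

theorem measurableSet_lastSmall : MeasurableSet (lastSmall p) :=
  measurableSet_lt measurable_Fmap1.snd.snd.norm measurable_Fmap1.norm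

theorem measurableSet_secondSmall : MeasurableSet (secondSmall p) :=
  measurableSet_lt measurable_Fmap2.norm measurable_Fmap1.norm

theorem rowExchange_mul_mem_lastSmall (hp : Odd p) (hd : ‖d‖ = (p : ℝ)⁻¹) {A N : Mat p}
    (hA : A.det ≠ 0) (hN : N ∈ boundedMatrices p 1)
    (hmem : disc (fixedPointForm N) ∈ squareClass d) :
    rowExchange (A, A * N) ∈ lastSmall p ↔ ‖N.trace‖ < 1 := by
  rw [disc_fixedPointForm] at hmem
  have hone := norm_one_trace_det_of_mem hp hN
  have hmid := norm_mid_lt_one_iff hp hone.le (norm_disc_lt_one_of_mem_squareClass hd hone.le hmem)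
  simp only [norm_one, lt_irrefl, false_or] at hmid
  rw [lastSmall, mem_ofPred_eq, Fmap1_rowExchange_mul, norm_smul, hone, mul_one, hmid]
  simp [norm_pos_iff.2 hA]

theorem norm_Fmap1_swapRows (v : VV p) : ‖Fmap1 (swapRows v)‖ = ‖Fmap1 v‖ := by
  simp only [Fmap1_swapRows, Prod.norm_def]
  rw [max_comm ‖(Fmap1 v).2.1‖ ‖(Fmap1 v).1‖, max_left_comm, max_comm ‖(Fmap1 v).2.2‖]

theorem pairWeight_swapRows (v : VV p) : pairWeight w s d (swapRows v) = pairWeight w s d v := by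
  have hdisc (x : QForm p) : disc (-x) = disc x := by simp [disc]
  rw [pairWeight, pairWeight, Pq_eq_disc_Fmap2, Fmap2_swapRows, hdisc, norm_neg,
    norm_Fmap1_swapRows, Pq_eq_disc_Fmap2]

theorem pairWeight_transposePair (hw : ∀ i j, w i j = w j i) (v : VV p) :
    pairWeight w s d (transposePair v) = pairWeight w s d v := by
  rw [pairWeight, pairWeight, Pq_eq_disc_Fmap1, Fmap1_transposePair, Fmap2_transposePair,
    ← Pq_eq_disc_Fmap2, levelWeight_comm hw]

theorem dominantPairs_subset : dominantPairs p ⊆ integralPairs p := sep_subset _ _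

theorem inter_integralPairs_inter_dominantPairs (S : Set (VV p)) :
    integralPairs p ∩ S ∩ dominantPairs p = dominantPairs p ∩ S := by
  rw [inter_right_comm, inter_eq_right.2 dominantPairs_subset]

theorem swapRows_mem_dominantPairs {v : VV p} :
    swapRows v ∈ dominantPairs p ↔
      v ∈ integralPairs p ∧ ‖(Fmap1 v).2.2‖ = ‖Fmap1 v‖ ∧ ‖Fmap2 v‖ ≤ ‖Fmap1 v‖ := by
  rw [dominantPairs, mem_sep_iff, swapRows_mem_integralPairs, norm_Fmap1_swapRows, Fmap1_swapRows,
    Fmap2_swapRows, norm_neg]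

theorem swapRows_preimage_sdiff_dominantPairs {S : Set (VV p)}
    (hswap : ∀ v, swapRows v ∈ S ↔ v ∈ S) (hle : ∀ v ∈ S, ‖Fmap2 v‖ ≤ ‖Fmap1 v‖) :
    swapRows ⁻¹' ((integralPairs p ∩ S) \ dominantPairs p) =
      integralPairs p ∩ (lastSmall p ∩ S) := by
  ext v
  have hlast : ‖(Fmap1 v).2.2‖ ≤ ‖Fmap1 v‖ :=
    (norm_snd_le (Fmap1 v).2).trans (norm_snd_le (Fmap1 v))
  simp only [mem_preimage, mem_sdiff, mem_inter_iff, swapRows_mem_integralPairs, hswap,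
    swapRows_mem_dominantPairs, lastSmall, mem_ofPred_eq, hlast.lt_iff_ne]
  have := hle v
  tauto

theorem setLIntegral_integralPairs_inter_lastSmall (hp : Odd p) (hd : ‖d‖ = (p : ℝ)⁻¹)
    {S : Set (VV p)} (hS : MeasurableSet S) (hle : ∀ v ∈ S, ‖Fmap2 v‖ ≤ ‖Fmap1 v‖) :
    ∫⁻ v in integralPairs p ∩ (lastSmall p ∩ S), pairWeight w s d v =
      ∫⁻ v in dominantPairs p ∩ (lastSmall p ∩ S), pairWeight w s d v := by
  have hmeas := measurableSet_integralPairs.inter (measurableSet_lastSmall.inter hS)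
  rw [← lintegral_inter_add_sdiff _ _ measurableSet_dominantPairs,
    inter_integralPairs_inter_dominantPairs,
    setLIntegral_eq_zero (hmeas.diff measurableSet_dominantPairs) fun v hv => ?_, add_zero]
  refine levelWeight_of_notMem (fun hmem => ?_) _ _
  rw [Pq_eq_disc_Fmap1] at hmem
  have hfst := (norm_fst_eq_or_norm_snd_snd_eq hp hd hmem).resolve_right hv.1.2.1.ne
  exact hv.2 ⟨hv.1.1, hfst, hle v hv.1.2.2⟩

theorem setLIntegral_integralPairs_inter_eq_add (hp : Odd p) (hd : ‖d‖ = (p : ℝ)⁻¹)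
    {S : Set (VV p)} (hS : MeasurableSet S) (hswap : ∀ v, swapRows v ∈ S ↔ v ∈ S)
    (hle : ∀ v ∈ S, ‖Fmap2 v‖ ≤ ‖Fmap1 v‖) :
    ∫⁻ v in integralPairs p ∩ S, pairWeight w s d v =
      (∫⁻ v in dominantPairs p ∩ S, pairWeight w s d v) +
        ∫⁻ v in dominantPairs p ∩ (lastSmall p ∩ S), pairWeight w s d v := by
  rw [← lintegral_inter_add_sdiff _ _ measurableSet_dominantPairs,
    inter_integralPairs_inter_dominantPairs,
    ← measurePreserving_swapRows.setLIntegral_comp_preimage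
      ((measurableSet_integralPairs.inter hS).diff measurableSet_dominantPairs)
      (measurable_pairWeight (ne_zero_of_norm_eq_inv_prime hd)),
    swapRows_preimage_sdiff_dominantPairs hswap hle]
  simp only [pairWeight_swapRows]
  rw [setLIntegral_integralPairs_inter_lastSmall hp hd hS hle]

theorem setLIntegral_prod_formWeight (hd : d ≠ 0) (T : Set ℚ_[p]) (X : Set (QForm p)) :
    ∫⁻ z in T ×ˢ X, formWeight w s d z.2 = volume T * ∫⁻ x in X, formWeight w s d x := by
  have hm : Measurable fun z : ℚ_[p] × QForm p => formWeight w s d z.2 :=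
    (measurable_formWeight hd).comp measurable_snd
  rw [Measure.volume_eq_prod, ← Measure.prod_restrict, lintegral_prod _ hm.aemeasurable]
  simp [mul_comm]

theorem volume_closedBall_one_add_volume_ball_one :
    volume (closedBall (0 : ℚ_[p]) 1) + volume (ball (0 : ℚ_[p]) 1) =
      ENNReal.ofReal (1 + (p : ℝ)⁻¹) := by
  rw [volume_closedBall_one, volume_ball_one, ENNReal.ofReal_add zero_le_one (by positivity),
    ENNReal.ofReal_one, ENNReal.ofReal_inv_of_pos prime_cast_pos, ENNReal.ofReal_natCast]

theorem setLIntegral_integralPairs_inter (hp : Odd p) (hd : ‖d‖ = (p : ℝ)⁻¹) (hs : 1 < s)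
    {S : Set (VV p)} (hS : MeasurableSet S) (hswap : ∀ v, swapRows v ∈ S ↔ v ∈ S)
    (hle : ∀ v ∈ S, ‖Fmap2 v‖ ≤ ‖Fmap1 v‖) {X : Set (QForm p)} (hXm : MeasurableSet X)
    (hX : X ⊆ closedBall 0 1)
    (hSX : ∀ A N : Mat p, A.det ≠ 0 → N ∈ boundedMatrices p 1 →
      (rowExchange (A, A * N) ∈ S ↔ fixedPointForm N ∈ X)) :
    ∫⁻ v in integralPairs p ∩ S, pairWeight w s d v =
      ENNReal.ofReal (detZeta p (2 * s - 2)) *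
        (ENNReal.ofReal (1 + (p : ℝ)⁻¹) * ∫⁻ x in X, formWeight w s d x) := by
  have hd0 := ne_zero_of_norm_eq_inv_prime hd
  have hsub {T : Set ℚ_[p]} (hT : T ⊆ closedBall 0 1) :
      T ×ˢ X ⊆ closedBall (0 : ℚ_[p] × QForm p) 1 := by
    rw [← Prod.mk_zero_zero, ← closedBall_prod_same]
    exact prod_mono hT hX
  have hmemProd (N : Mat p) (T : Set ℚ_[p]) :
      traceSplit p N ∈ T ×ˢ X ↔ N.trace ∈ T ∧ fixedPointForm N ∈ X := Iff.rfl
  have hall := setLIntegral_dominantPairs_inter (w := w) hp hs hd0 hS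
    (measurableSet_closedBall.prod hXm) (hsub subset_rfl) fun A N hA hN _ => by
      have htrace : N.trace ∈ closedBall 0 1 := mem_closedBall_zero_iff.2 <|
        (norm_fst_le (traceSplit p N)).trans ((norm_traceSplit_le_one_iff hp).2 hN)
      rw [hSX A N hA hN, hmemProd, and_iff_right htrace]
  have hlast := setLIntegral_dominantPairs_inter (w := w) hp hs hd0
    (measurableSet_lastSmall.inter hS) (measurableSet_ball.prod hXm)
    (hsub ball_subset_closedBall) fun A N hA hN hmem => by
      rw [mem_inter_iff, rowExchange_mul_mem_lastSmall hp hd hA hN hmem, hSX A N hA hN, hmemProd,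
        mem_ball_zero_iff]
  rw [setLIntegral_integralPairs_inter_eq_add hp hd hS hswap hle, hall, hlast,
    setLIntegral_prod_formWeight hd0, setLIntegral_prod_formWeight hd0, ← mul_add, ← add_mul,
    volume_closedBall_one_add_volume_ball_one]

theorem transposePair_preimage_sdiff :
    transposePair ⁻¹' (integralPairs p \ {v | ‖Fmap2 v‖ ≤ ‖Fmap1 v‖}) =
      integralPairs p ∩ secondSmall p := by
  ext v
  simp [secondSmall, transposePair_mem_integralPairs, Fmap1_transposePair, Fmap2_transposePair]

theorem setLIntegral_integralPairs_eq_add (hd : d ≠ 0) (hw : ∀ i j, w i j = w j i) :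
    ∫⁻ v in integralPairs p, pairWeight w s d v =
      (∫⁻ v in integralPairs p ∩ {v | ‖Fmap2 v‖ ≤ ‖Fmap1 v‖}, pairWeight w s d v) +
        ∫⁻ v in integralPairs p ∩ secondSmall p, pairWeight w s d v := by
  have hle : MeasurableSet {v : VV p | ‖Fmap2 v‖ ≤ ‖Fmap1 v‖} :=
    measurableSet_le measurable_Fmap2.norm measurable_Fmap1.norm
  rw [← lintegral_inter_add_sdiff _ _ hle,
    ← measurePreserving_transposePair.setLIntegral_comp_preimage
      (measurableSet_integralPairs.diff hle) (measurable_pairWeight hd),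
    transposePair_preimage_sdiff]
  simp only [pairWeight_transposePair hw]

theorem setLIntegral_integralPairs_pairWeight (hp : Odd p) (hd : ‖d‖ = (p : ℝ)⁻¹) (hs : 1 < s)
    (hw : ∀ i j, w i j = w j i) :
    ∫⁻ v in integralPairs p, pairWeight w s d v =
      ENNReal.ofReal (detZeta p (2 * s - 2)) * (ENNReal.ofReal (1 + (p : ℝ)⁻¹) *
        ∑' c, (contentTerm w s p c + contentTerm w s p (c + 1))) := by
  have hle := setLIntegral_integralPairs_inter (w := w) (S := {v | ‖Fmap2 v‖ ≤ ‖Fmap1 v‖}) hp hd hs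
    (measurableSet_le measurable_Fmap2.norm measurable_Fmap1.norm)
    (fun v => by rw [mem_ofPred_eq, Fmap2_swapRows, norm_neg, norm_Fmap1_swapRows, mem_ofPred_eq])
    (fun v hv => hv) measurableSet_closedBall subset_rfl fun A N hA hN => by
      rw [mem_ofPred_eq, Fmap1_rowExchange_mul, Fmap2_rowExchange_mul, norm_smul, norm_smul,
        norm_one_trace_det_of_mem hp hN, mul_le_mul_iff_right₀ (norm_pos_iff.2 hA),
        mem_closedBall_zero_iff]
  have hlt := setLIntegral_integralPairs_inter (w := w) (S := secondSmall p) hp hd hs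
    measurableSet_secondSmall
    (fun v => by rw [secondSmall, mem_ofPred_eq, Fmap2_swapRows, norm_neg, norm_Fmap1_swapRows,
      mem_ofPred_eq])
    (fun v hv => hv.le) measurableSet_ball ball_subset_closedBall fun A N hA hN => by
      rw [secondSmall, mem_ofPred_eq, Fmap1_rowExchange_mul, Fmap2_rowExchange_mul, norm_smul,
        norm_smul, norm_one_trace_det_of_mem hp hN, mul_lt_mul_iff_right₀ (norm_pos_iff.2 hA),
        mem_ball_zero_iff]
  rw [setLIntegral_integralPairs_eq_add (ne_zero_of_norm_eq_inv_prime hd) hw, hle, hlt,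
    setLIntegral_closedBall_formWeight hp hd, setLIntegral_ball_formWeight hp hd, ← mul_add,
    ← mul_add, ENNReal.tsum_add]

end Decomposition

/-! ### The Hecke recurrence and its generating series -/

section HeckeSeries

/-- The solution of `S (n + 2) = lam * S (n + 1) - q * S n` with `S 0 = 1`, `S 1 = lam`, that is
`S n = ∑ i + j = n, x ^ i * y ^ j` for the Satake parameters `x + y = lam`, `x * y = q`. -/
def heckeSum (lam q : ℝ) : ℕ → ℝ
  | 0 => 1
  | 1 => lam
  | n + 2 => lam * heckeSum lam q (n + 1) - q * heckeSum lam q n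

/-- The backward differences of `heckeSum`. -/
def heckeDiff (lam q : ℝ) : ℕ → ℝ
  | 0 => 1
  | n + 1 => heckeSum lam q (n + 1) - heckeSum lam q n

/-- A ratio beyond which geometric sequences dominate `heckeSum`. -/
def heckeBound (lam q : ℝ) : ℝ := |lam| + |q| + 1

/-- The number of integers of absolute value `c`, that is, of ways in which the levels of `F₁` and
`F₂` can differ by `c`. -/
def contentMultiplicity (c : ℕ) : ℝ := if c = 0 then 1 else 2

variable {lam q Q : ℝ}

theorem contentMultiplicity_nonneg (c : ℕ) : 0 ≤ contentMultiplicity c := by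
  unfold contentMultiplicity
  split_ifs <;> norm_num

theorem one_le_heckeBound : 1 ≤ heckeBound lam q := by
  unfold heckeBound
  linarith [abs_nonneg lam, abs_nonneg q]

theorem abs_heckeSum_le (n : ℕ) : |heckeSum lam q n| ≤ heckeBound lam q ^ n := by
  induction n using Nat.twoStepInduction with
  | zero => simp [heckeSum]
  | one =>
    rw [pow_one, heckeSum, heckeBound]
    linarith [abs_nonneg q]
  | more n h0 h1 =>
    have hM := one_le_heckeBound (lam := lam) (q := q)
    set M := heckeBound lam q with hMdef
    have hq : |q| ≤ |q| * M := le_mul_of_one_le_right (abs_nonneg q) hM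
    calc |lam * heckeSum lam q (n + 1) - q * heckeSum lam q n|
        ≤ |lam| * M ^ (n + 1) + |q| * M ^ n := by
          refine (abs_sub _ _).trans ?_
          rw [abs_mul, abs_mul]
          gcongr
      _ ≤ (|lam| * M + |q| * M) * M ^ n := by
          rw [add_mul, mul_assoc, ← pow_succ']
          gcongr
      _ ≤ M * M * M ^ n := by
          rw [← add_mul]
          gcongr
          rw [hMdef, heckeBound]
          linarith
      _ = M ^ (n + 2) := by ring

theorem abs_heckeDiff_le (n : ℕ) : |heckeDiff lam q n| ≤ 2 * heckeBound lam q ^ n := by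
  cases n with
  | zero => simp [heckeDiff]
  | succ n =>
    have hmono : heckeBound lam q ^ n ≤ heckeBound lam q ^ (n + 1) :=
      pow_le_pow_right₀ one_le_heckeBound n.le_succ
    calc |heckeDiff lam q (n + 1)| ≤ |heckeSum lam q (n + 1)| + |heckeSum lam q n| := abs_sub _ _
      _ ≤ 2 * heckeBound lam q ^ (n + 1) := by
        linarith [abs_heckeSum_le (lam := lam) (q := q) (n + 1),
          abs_heckeSum_le (lam := lam) (q := q) n]

theorem sum_range_heckeDiff (n : ℕ) :
    ∑ l ∈ Finset.range (n + 1), heckeDiff lam q l = heckeSum lam q n := by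
  induction n with
  | zero => simp [heckeDiff, heckeSum]
  | succ n ih => rw [Finset.sum_range_succ, ih, heckeDiff, add_sub_cancel]

theorem heckeSum_sq_add_three (n : ℕ) :
    heckeSum lam q (n + 3) ^ 2 = (lam ^ 2 - q) * heckeSum lam q (n + 2) ^ 2 -
      (q * lam ^ 2 - q ^ 2) * heckeSum lam q (n + 1) ^ 2 + q ^ 3 * heckeSum lam q n ^ 2 := by
  simp only [heckeSum]
  ring

theorem summable_heckeSum_sq (hQ : 0 ≤ Q) (hlt : heckeBound lam q ^ 2 * Q < 1) :
    Summable fun n => heckeSum lam q n ^ 2 * Q ^ n := by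
  refine (summable_geometric_of_lt_one (by positivity) hlt).of_nonneg_of_le
    (fun n => by positivity) fun n => ?_
  rw [mul_pow, pow_right_comm, ← sq_abs]
  gcongr
  exact abs_heckeSum_le n

theorem tsum_heckeSum_sq_mul (hQ : 0 ≤ Q) (hlt : heckeBound lam q ^ 2 * Q < 1) :
    (∑' n, heckeSum lam q n ^ 2 * Q ^ n) *
        (1 - (lam ^ 2 - q) * Q + (q * lam ^ 2 - q ^ 2) * Q ^ 2 - q ^ 3 * Q ^ 3) = 1 + q * Q := by
  have hsum := summable_heckeSum_sq hQ hlt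
  have htail (k : ℕ) : Summable fun n => heckeSum lam q (n + k) ^ 2 * Q ^ (n + k) :=
    (summable_nat_add_iff k).2 hsum
  have hrec : (∑' n, heckeSum lam q (n + 3) ^ 2 * Q ^ (n + 3)) =
      (lam ^ 2 - q) * Q * (∑' n, heckeSum lam q (n + 2) ^ 2 * Q ^ (n + 2)) -
        (q * lam ^ 2 - q ^ 2) * Q ^ 2 * (∑' n, heckeSum lam q (n + 1) ^ 2 * Q ^ (n + 1)) +
        q ^ 3 * Q ^ 3 * ∑' n, heckeSum lam q n ^ 2 * Q ^ n := by
    rw [← tsum_mul_left, ← tsum_mul_left, ← tsum_mul_left,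
      ← ((htail 2).mul_left _).tsum_sub ((htail 1).mul_left _),
      ← (((htail 2).mul_left _).sub ((htail 1).mul_left _)).tsum_add (hsum.mul_left _)]
    refine tsum_congr fun n => ?_
    rw [heckeSum_sq_add_three]
    ring
  have htwo : heckeSum lam q 2 = lam * lam - q := by simp [heckeSum]
  have h1 := hsum.sum_add_tsum_nat_add 1
  have h2 := hsum.sum_add_tsum_nat_add 2
  have h3 := hsum.sum_add_tsum_nat_add 3
  simp only [Finset.sum_range_succ, Finset.sum_range_zero, heckeSum.eq_1,
    heckeSum.eq_2, htwo] at h1 h2 h3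
  set U := ∑' n, heckeSum lam q n ^ 2 * Q ^ n
  linear_combination hrec - h3 + (lam ^ 2 - q) * Q * h2 - (q * lam ^ 2 - q ^ 2) * Q ^ 2 * h1

theorem sum_antidiagonal_heckeDiff_snd (n : ℕ) :
    ∑ k ∈ Finset.HasAntidiagonal.antidiagonal n, heckeDiff lam q k.2 = heckeSum lam q n := by
  rw [← Finset.Nat.sum_antidiagonal_swap, ← sum_range_heckeDiff]
  exact Finset.Nat.sum_antidiagonal_eq_sum_range_succ (fun i _ => heckeDiff lam q i) n

theorem sum_antidiagonal_contentMultiplicity_mul (n : ℕ) :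
    ∑ k ∈ Finset.HasAntidiagonal.antidiagonal n, contentMultiplicity k.1 * heckeDiff lam q k.2 =
      2 * heckeSum lam q n - heckeDiff lam q n := by
  cases n with
  | zero => norm_num [contentMultiplicity, heckeSum, heckeDiff]
  | succ n =>
    have htail (k : ℕ × ℕ) : contentMultiplicity (k.1 + 1) * heckeDiff lam q k.2 =
        2 * heckeDiff lam q k.2 := by rw [contentMultiplicity, if_neg k.1.succ_ne_zero]
    rw [Finset.Nat.sum_antidiagonal_succ, Finset.sum_congr rfl fun k _ => htail k,
      ← Finset.mul_sum, sum_antidiagonal_heckeDiff_snd, contentMultiplicity, if_pos rfl, heckeDiff]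
    ring

theorem heckeDiff_succ_mul (n : ℕ) :
    heckeDiff lam q (n + 1) * (2 * heckeSum lam q (n + 1) - heckeDiff lam q (n + 1)) =
      heckeSum lam q (n + 1) ^ 2 - heckeSum lam q n ^ 2 := by
  rw [heckeDiff]
  ring

theorem hasSum_heckeDiff_mul (hQ : 0 ≤ Q) (hlt : heckeBound lam q ^ 2 * Q < 1) :
    HasSum (fun n => heckeDiff lam q n * (2 * heckeSum lam q n - heckeDiff lam q n) * Q ^ n)
      ((1 - Q) * ∑' n, heckeSum lam q n ^ 2 * Q ^ n) := by
  have hsum := (summable_heckeSum_sq hQ hlt).hasSum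
  rw [← hasSum_nat_add_iff' 1]
  have hshift := ((hasSum_nat_add_iff' 1).2 hsum).sub (hsum.mul_left Q)
  convert hshift using 1
  · funext n
    rw [heckeDiff_succ_mul]
    ring
  · simp only [Finset.sum_range_one, heckeSum, heckeDiff, pow_zero]
    ring

theorem summable_contentMultiplicity_mul (hQ : 0 ≤ Q) (hlt : heckeBound lam q ^ 2 * Q < 1) :
    Summable fun k : ℕ × ℕ => contentMultiplicity k.1 *
        (heckeDiff lam q (k.1 + k.2) * heckeDiff lam q k.2) * Q ^ (k.1 + k.2) := by
  have hgeom := summable_geometric_of_lt_one (by positivity) hlt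
  refine .of_norm_bounded (((hgeom.mul_of_nonneg hgeom (fun n => by positivity) fun n => by
    positivity)).mul_left 8) fun k => ?_
  have hmult : |contentMultiplicity k.1| ≤ 2 := by
    unfold contentMultiplicity
    split_ifs <;> norm_num
  have hM : 0 ≤ heckeBound lam q := zero_le_one.trans one_le_heckeBound
  rw [norm_mul, norm_mul, norm_mul, Real.norm_eq_abs, Real.norm_eq_abs, Real.norm_eq_abs, norm_pow,
    Real.norm_of_nonneg hQ]
  calc |contentMultiplicity k.1| * (|heckeDiff lam q (k.1 + k.2)| * |heckeDiff lam q k.2|) *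
        Q ^ (k.1 + k.2)
      ≤ 2 * (2 * heckeBound lam q ^ (k.1 + k.2) * (2 * heckeBound lam q ^ k.2)) *
        Q ^ (k.1 + k.2) := by
        gcongr
        exacts [abs_heckeDiff_le _, abs_heckeDiff_le _]
    _ ≤ 2 * (2 * heckeBound lam q ^ (k.1 + k.2) * (2 * heckeBound lam q ^ (k.1 + k.2))) *
        Q ^ (k.1 + k.2) := by
        gcongr
        exacts [one_le_heckeBound, Nat.le_add_left _ _]
    _ = 8 * ((heckeBound lam q ^ 2 * Q) ^ k.1 * (heckeBound lam q ^ 2 * Q) ^ k.2) := by ring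

theorem hasSum_contentMultiplicity_mul (hQ : 0 ≤ Q) (hlt : heckeBound lam q ^ 2 * Q < 1) :
    HasSum (fun k : ℕ × ℕ => contentMultiplicity k.1 *
        (heckeDiff lam q (k.1 + k.2) * heckeDiff lam q k.2) * Q ^ (k.1 + k.2))
      ((1 - Q) * ∑' n, heckeSum lam q n ^ 2 * Q ^ n) := by
  set f : ℕ × ℕ → ℝ := fun k => contentMultiplicity k.1 *
    (heckeDiff lam q (k.1 + k.2) * heckeDiff lam q k.2) * Q ^ (k.1 + k.2) with hf
  have hfiber (n : ℕ) : ∑ k ∈ Finset.HasAntidiagonal.antidiagonal n, f k =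
      heckeDiff lam q n * (2 * heckeSum lam q n - heckeDiff lam q n) * Q ^ n := by
    rw [← sum_antidiagonal_contentMultiplicity_mul, Finset.mul_sum, Finset.sum_mul]
    refine Finset.sum_congr rfl fun k hk => ?_
    rw [hf, ← Finset.HasAntidiagonal.mem_antidiagonal.1 hk]
    ring
  have hsum : Summable f := summable_contentMultiplicity_mul hQ hlt
  have hdiag := (Finset.HasAntidiagonal.sigmaAntidiagonalEquivProd.hasSum_iff.2 hsum.hasSum).sigma
    fun n => (Finset.HasAntidiagonal.antidiagonal n).hasSum f
  simp only [hfiber] at hdiag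
  rw [← hdiag.unique (hasSum_heckeDiff_mul hQ hlt)]
  exact hsum.hasSum

theorem eq_heckeDiff_div_pow (hq : q ≠ 0) {β : ℕ → ℝ} (hβ0 : β 0 = 1) (hβ1 : β 1 = (lam - 1) / q)
    (hrec : ∀ k, q * β (k + 2) - lam * β (k + 1) + β k = 0) (n : ℕ) :
    β n = heckeDiff lam q n / q ^ n := by
  rw [eq_div_iff (pow_ne_zero n hq)]
  induction n using Nat.twoStepInduction with
  | zero => simp [hβ0, heckeDiff]
  | one => simp [hβ1, heckeDiff, heckeSum, hq]
  | more n h0 h1 =>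
    have hstep : heckeDiff lam q (n + 2) =
        lam * heckeDiff lam q (n + 1) - q * heckeDiff lam q n := by
      cases n <;> simp only [heckeDiff, heckeSum] <;> ring
    rw [hstep, ← h0, ← h1]
    linear_combination q ^ (n + 1) * hrec n

end HeckeSeries

/-! ### Expansion of the local zeta integral -/

section ZetaIntegral

/-- The factor of the coefficients `zetaCoeff` that is independent of the levels. -/
noncomputable def zetaFactor (q : ℕ) (s : ℝ) : ℝ :=
  detZeta q (2 * s - 2) * (1 + (q : ℝ)⁻¹) *
    (1 / 2 * (1 - (q : ℝ)⁻¹) * (1 - (q : ℝ)⁻¹ ^ 2) * (q : ℝ) ^ (1 - s))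

/-- The coefficient of `w (k.1 + k.2) k.2` in the expansion of the local zeta integral whose
integrand carries a symmetric function `w` of the two levels. -/
noncomputable def zetaCoeff (q : ℕ) (s : ℝ) (k : ℕ × ℕ) : ℝ :=
  zetaFactor q s * (contentMultiplicity k.1 *
    (((q : ℝ) ^ (-2 * s)) ^ (k.1 + k.2) * (q : ℝ) ^ (k.1 + k.2) * (q : ℝ) ^ k.2))

variable {w : ℕ → ℕ → ℝ≥0∞} {s : ℝ} {d : ℚ_[p]}

theorem tsum_add_tsum_succ_eq_tsum_contentMultiplicity_mul (f : ℕ → ℝ≥0∞) :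
    ∑' c, (f c + f (c + 1)) = ∑' c, ENNReal.ofReal (contentMultiplicity c) * f c := by
  rw [ENNReal.tsum_add, tsum_eq_zero_add' (f := f) ENNReal.summable,
    tsum_eq_zero_add' (f := fun c => ENNReal.ofReal (contentMultiplicity c) * f c)
      ENNReal.summable, add_assoc, ← two_mul, ← ENNReal.tsum_mul_left]
  simp [contentMultiplicity]

theorem contentTerm_eq_tsum (c : ℕ) : contentTerm w s p c =
    ∑' l : ℕ, ENNReal.ofReal (1 / 2 * (1 - (p : ℝ)⁻¹) * (1 - (p : ℝ)⁻¹ ^ 2) * (p : ℝ) ^ (1 - s) *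
      (((p : ℝ) ^ (-2 * s)) ^ (c + l) * (p : ℝ) ^ (c + l) * (p : ℝ) ^ l)) * w (c + l) l := by
  have hp0 := prime_cast_pos (p := p)
  have hr1 : (p : ℝ)⁻¹ ≤ 1 := inv_prime_lt_one.le
  have hr2 : 0 ≤ 1 - (p : ℝ)⁻¹ ^ 2 :=
    sub_nonneg.2 (pow_le_one₀ (inv_nonneg.2 hp0.le) hr1)
  set t : ℝ := (p : ℝ) ^ (-s) with ht
  have hpow (n : ℕ) : ((p : ℝ)⁻¹ ^ n) ^ (s - 2) = ((p : ℝ) ^ 2 * t) ^ n := by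
    rw [← Real.rpow_pow_comm (inv_nonneg.2 hp0.le), Real.inv_rpow hp0.le, ← Real.rpow_neg hp0.le,
      neg_sub, sub_eq_add_neg, Real.rpow_add hp0, Real.rpow_two]
  have hone : (p : ℝ) ^ (1 - s) = p * t := by
    rw [sub_eq_add_neg, Real.rpow_add hp0, Real.rpow_one]
  have htwo : (p : ℝ) ^ (-2 * s) = t ^ 2 := by
    rw [ht, ← Real.rpow_natCast, ← Real.rpow_mul hp0.le]
    ring_nf
  rw [contentTerm, ← mul_assoc, ← ENNReal.tsum_mul_left]
  refine tsum_congr fun l => ?_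
  rw [hpow, hone, htwo, mul_left_comm (ENNReal.ofReal (_ * _ * _)), mul_left_comm, mul_comm,
    ← ENNReal.ofReal_mul (by positivity), ← ENNReal.ofReal_mul (by positivity),
    ← ENNReal.ofReal_mul (by positivity)]
  congr 2
  simp only [inv_pow]
  field_simp
  ring

theorem zetaFactor_nonneg (hs : 1 < s) : 0 ≤ zetaFactor p s := by
  have hr1 := inv_prime_lt_one (p := p).le
  have hr2 : 0 ≤ 1 - (p : ℝ)⁻¹ ^ 2 :=
    sub_nonneg.2 (pow_le_one₀ (inv_nonneg.2 prime_cast_pos.le) hr1)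
  have hdet : 0 ≤ detZeta p (2 * s - 2) := detZeta_nonneg (by linarith)
  unfold zetaFactor
  positivity

theorem zetaCoeff_nonneg (hs : 1 < s) (k : ℕ × ℕ) : 0 ≤ zetaCoeff p s k :=
  mul_nonneg (zetaFactor_nonneg hs) (mul_nonneg (contentMultiplicity_nonneg _) (by positivity))

theorem setLIntegral_integralPairs_pairWeight_eq_tsum (hp : Odd p) (hd : ‖d‖ = (p : ℝ)⁻¹)
    (hs : 1 < s) (hw : ∀ i j, w i j = w j i) :
    ∫⁻ v in integralPairs p, pairWeight w s d v =
      ∑' k : ℕ × ℕ, ENNReal.ofReal (zetaCoeff p s k) * w (k.1 + k.2) k.2 := by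
  have hr : 0 ≤ 1 + (p : ℝ)⁻¹ := by positivity
  have hdet : 0 ≤ detZeta p (2 * s - 2) := detZeta_nonneg (by linarith)
  rw [setLIntegral_integralPairs_pairWeight hp hd hs hw,
    tsum_add_tsum_succ_eq_tsum_contentMultiplicity_mul, ENNReal.tsum_prod', ← mul_assoc,
    ← ENNReal.ofReal_mul hdet, ← ENNReal.tsum_mul_left]
  refine tsum_congr fun c => ?_
  rw [contentTerm_eq_tsum, ← mul_assoc, ← ENNReal.ofReal_mul (mul_nonneg hdet hr),
    ← ENNReal.tsum_mul_left]
  refine tsum_congr fun l => ?_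
  rw [← mul_assoc, ← ENNReal.ofReal_mul
    (mul_nonneg (mul_nonneg hdet hr) (contentMultiplicity_nonneg c)), zetaCoeff, zetaFactor]
  congr 2
  ring

end ZetaIntegral

/-! ### The signed integrand -/

section SignedIntegrand

theorem integrable_and_integral_eq_tsum {α ι : Type*} [MeasurableSpace α] {μ : Measure α}
    {f : α → ℝ} {a : ι → ℝ} (hf : AEStronglyMeasurable f μ) (ha : Summable a)
    (hpos : ∫⁻ x, ENNReal.ofReal (f x) ∂μ = ∑' k, ENNReal.ofReal (a k))
    (hneg : ∫⁻ x, ENNReal.ofReal (-f x) ∂μ = ∑' k, ENNReal.ofReal (-a k)) :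
    Integrable f μ ∧ ∫ x, f x ∂μ = ∑' k, a k := by
  have hfin := ha.tsum_ofReal_ne_top
  have hfin' := ha.neg.tsum_ofReal_ne_top
  have hint : Integrable f μ := by
    refine ⟨hf, ?_⟩
    have habs (x : α) : ‖f x‖ₑ = ENNReal.ofReal (f x) + ENNReal.ofReal (-f x) := by
      rw [← ofReal_norm, Real.norm_eq_abs]
      rcases le_total 0 (f x) with h | h
      · rw [abs_of_nonneg h, ENNReal.ofReal_of_nonpos (neg_nonpos.2 h), add_zero]
      · rw [abs_of_nonpos h, ENNReal.ofReal_of_nonpos h, zero_add]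
    rw [HasFiniteIntegral]
    simp only [habs]
    rw [lintegral_add_left' hf.aemeasurable.ennreal_ofReal, hpos, hneg]
    exact ENNReal.add_lt_top.2 ⟨hfin.lt_top, hfin'.lt_top⟩
  refine ⟨hint, ?_⟩
  rw [integral_eq_lintegral_pos_part_sub_lintegral_neg_part hint, hpos, hneg,
    ENNReal.tsum_toReal_eq fun _ => ENNReal.ofReal_ne_top,
    ENNReal.tsum_toReal_eq fun _ => ENNReal.ofReal_ne_top,
    ← (ENNReal.summable_toReal hfin).tsum_sub (ENNReal.summable_toReal hfin')]
  simp only [ENNReal.toReal_ofReal', max_zero_sub_eq_self]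

theorem level_eq {d P : ℚ_[p]} (hd : ‖d‖ = (p : ℝ)⁻¹) (hP : P ≠ 0) {m : ℝ} {l : ℕ}
    (h : ‖d‖ * m ^ 2 = ‖P‖ * (p : ℝ) ^ (2 * l)) : level p (m ^ 2 / ‖P‖) = l := by
  have hp0 := (prime_cast_pos (p := p)).ne'
  have hP0 : ‖P‖ ≠ 0 := norm_ne_zero_iff.2 hP
  rw [hd, inv_mul_eq_iff_eq_mul₀ hp0] at h
  rw [h, mul_left_comm, mul_div_cancel_left₀ _ hP0, level_prime_mul_pow]

theorem exists_level {d : ℚ_[p]} (hd : ‖d‖ = (p : ℝ)⁻¹) {x : QForm p}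
    (hx : disc x ∈ squareClass d) :
    ∃ l : ℕ, ‖d‖ * ‖x‖ ^ 2 = ‖disc x‖ * (p : ℝ) ^ (2 * l) := by
  have hp0 := (prime_cast_pos (p := p)).ne'
  obtain ⟨a, ha⟩ := exists_norm_eq_qForm x
  have ha0 : a ≠ 0 := by
    rintro rfl
    rw [norm_zero, eq_comm, norm_eq_zero] at ha
    exact ne_zero_of_mem_squareClass (ne_zero_of_norm_eq_inv_prime hd) hx (by simp [ha, disc])
  have hnorm : ‖a⁻¹ • x‖ = 1 := by
    rw [norm_smul, norm_inv, ha, inv_mul_cancel₀ (ha ▸ norm_ne_zero_iff.2 ha0)]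
  obtain ⟨l, hl⟩ := exists_norm_eq_of_mem_squareClass hd
    (disc_smul a⁻¹ x ▸ (sq_mul_mem_squareClass_iff (inv_ne_zero ha0)).2 hx)
    (norm_disc_le_one hnorm.le)
  refine ⟨l, ?_⟩
  have hdisc : ‖disc x‖ = ‖a‖ ^ 2 * (p : ℝ)⁻¹ ^ (2 * l + 1) := by
    rw [← hl, disc_smul, norm_mul, norm_pow, norm_inv, inv_pow,
      mul_inv_cancel_left₀ (pow_ne_zero 2 (norm_ne_zero_iff.2 ha0))]
  rw [hdisc, ← ha, hd, inv_pow]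
  field_simp
  ring

theorem Vd_eq_inter (d : ℤ_[p]) : Vd p d = integralPairs p ∩ Pq ⁻¹' squareClass (d : ℚ_[p]) :=
  Set.ext fun _ => and_assoc.symm

variable {d : ℤ_[p]} {β : ℕ → ℝ} {s : ℝ}

theorem measurableSet_Vd (hd : (d : ℚ_[p]) ≠ 0) : MeasurableSet (Vd p d) :=
  Vd_eq_inter d ▸ measurableSet_integralPairs.inter
    (measurable_Pq (measurableSet_squareClass hd))

theorem fs_eq_of_mem (hd : ‖(d : ℚ_[p])‖ = (p : ℝ)⁻¹) {v : VV p}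
    (hv : Pq v ∈ squareClass (d : ℚ_[p])) :
    fs p d β s v = β (level p (‖Fmap1 v‖ ^ 2 / ‖Pq v‖)) * β (level p (‖Fmap2 v‖ ^ 2 / ‖Pq v‖)) *
      ‖Pq v‖ ^ (s - 2) := by
  have hP : Pq v ≠ 0 := ne_zero_of_mem_squareClass (ne_zero_of_norm_eq_inv_prime hd) hv
  have h1 := exists_level hd (Pq_eq_disc_Fmap1 v ▸ hv)
  have h2 := exists_level hd (Pq_eq_disc_Fmap2 v ▸ hv)
  rw [← Pq_eq_disc_Fmap1, ← mcoord_eq_norm] at h1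
  rw [← Pq_eq_disc_Fmap2, ← mcoord_eq_norm] at h2
  rw [fs, dif_pos ⟨hP, h1, h2⟩, ← mcoord_eq_norm, ← mcoord_eq_norm, level_eq hd hP h1.choose_spec,
    level_eq hd hP h2.choose_spec]

theorem setLIntegral_Vd_ofReal_mul_fs (hp : Odd p) (hd : ‖(d : ℚ_[p])‖ = (p : ℝ)⁻¹) (hs : 1 < s)
    (c : ℝ) :
    ∫⁻ v in Vd p d, ENNReal.ofReal (c * fs p d β s v) =
      ∑' k : ℕ × ℕ, ENNReal.ofReal (c * (zetaCoeff p s k * (β (k.1 + k.2) * β k.2))) := by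
  have hd0 := ne_zero_of_norm_eq_inv_prime hd
  have hS : MeasurableSet (Pq ⁻¹' squareClass (d : ℚ_[p])) :=
    measurable_Pq (measurableSet_squareClass hd0)
  set w : ℕ → ℕ → ℝ≥0∞ := fun i j => ENNReal.ofReal (c * (β i * β j)) with hw
  have hfs : EqOn (fun v => ENNReal.ofReal (c * fs p d β s v)) (pairWeight w s d) (Vd p d) := by
    intro v hv
    have hv' : Pq v ∈ squareClass (d : ℚ_[p]) := hv.2.2
    dsimp only
    rw [pairWeight, levelWeight_of_mem hv', fs_eq_of_mem hd hv', ← mul_assoc,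
      ENNReal.ofReal_mul' (by positivity)]
  have hsupp : (Pq ⁻¹' squareClass (d : ℚ_[p])).indicator (pairWeight w s d) = pairWeight w s d :=
    indicator_eq_self.2 fun v hv => not_imp_comm.1 (fun h => levelWeight_of_notMem h _ _) hv
  rw [setLIntegral_congr_fun (measurableSet_Vd hd0) hfs, Vd_eq_inter, inter_comm,
    ← setLIntegral_indicator hS, hsupp,
    setLIntegral_integralPairs_pairWeight_eq_tsum hp hd hs fun i j => by
      simp only [hw, mul_comm (β i)]]
  refine tsum_congr fun k => ?_
  rw [mul_left_comm, ENNReal.ofReal_mul (zetaCoeff_nonneg hs k)]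

theorem aestronglyMeasurable_fs (hd : ‖(d : ℚ_[p])‖ = (p : ℝ)⁻¹) (μ : Measure (VV p)) :
    AEStronglyMeasurable (fs p d β s) (μ.restrict (Vd p d)) := by
  have hβ : Measurable β := measurable_of_countable β
  have hmeas : Measurable fun v : VV p => β (level p (‖Fmap1 v‖ ^ 2 / ‖Pq v‖)) *
      β (level p (‖Fmap2 v‖ ^ 2 / ‖Pq v‖)) * ‖Pq v‖ ^ (s - 2) := by
    fun_prop
  refine hmeas.aestronglyMeasurable.congr ?_
  filter_upwards [ae_restrict_mem (measurableSet_Vd (ne_zero_of_norm_eq_inv_prime hd))] with v hv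
  exact (fs_eq_of_mem hd hv.2.2).symm

end SignedIntegrand

/-! ### Evaluation -/

section Evaluation

variable {lam s : ℝ}

theorem heckeBound_sq_mul_lt_one (hs : heckeBound lam p < s) :
    heckeBound lam p ^ 2 * (p : ℝ) ^ (-2 * s) < 1 := by
  have hp0 := prime_cast_pos (p := p)
  have hp2 : (2 : ℝ) ≤ p := mod_cast (Fact.out : p.Prime).two_le
  have hs1 : 1 ≤ s := one_le_heckeBound.trans hs.le
  have hlt : heckeBound lam p < (p : ℝ) ^ s := by
    calc heckeBound lam p < 1 + s * 1 := by linarith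
      _ ≤ (1 + 1) ^ s := one_add_mul_self_le_rpow_one_add (by norm_num) hs1
      _ ≤ (p : ℝ) ^ s := Real.rpow_le_rpow (by norm_num) (by linarith) (by linarith)
  have hbound : 0 ≤ heckeBound lam p := zero_le_one.trans one_le_heckeBound
  rw [neg_mul, Real.rpow_neg hp0.le, ← div_eq_mul_inv, div_lt_one (by positivity), mul_comm 2 s,
    Real.rpow_mul hp0.le, Real.rpow_two]
  gcongr

theorem hasSum_zetaCoeff_mul {β : ℕ → ℝ} (hβ : ∀ n, β n = heckeDiff lam p n / (p : ℝ) ^ n)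
    (hs : heckeBound lam p < s) :
    HasSum (fun k : ℕ × ℕ => zetaCoeff p s k * (β (k.1 + k.2) * β k.2))
      (zetaFactor p s *
        ((1 - (p : ℝ) ^ (-2 * s)) * ∑' n, heckeSum lam p n ^ 2 * ((p : ℝ) ^ (-2 * s)) ^ n)) := by
  have hp0 := (prime_cast_pos (p := p)).ne'
  refine ((hasSum_contentMultiplicity_mul (by positivity)
    (heckeBound_sq_mul_lt_one hs)).mul_left (zetaFactor p s)).congr_fun fun k => ?_
  rw [hβ, hβ, zetaCoeff]
  field_simp

theorem zetaFactor_mul_one_sub (hs : 1 < s) :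
    zetaFactor p s * (1 - (p : ℝ) ^ (-2 * s)) =
      1 / 2 * (1 - (p : ℝ)⁻¹) * (1 - (p : ℝ)⁻¹ ^ 2) ^ 3 * (p : ℝ) ^ (1 - s) *
        (1 - (p : ℝ) ^ (1 - 2 * s))⁻¹ := by
  have hp0 := prime_cast_pos (p := p)
  have hQ : 1 - (p : ℝ) ^ (-2 * s) ≠ 0 :=
    (sub_pos.2 (Real.rpow_lt_one_of_one_lt_of_neg one_lt_prime_cast (by linarith))).ne'
  have hpow : (p : ℝ)⁻¹ ^ (2 * s - 2) = (p : ℝ) ^ 2 * (p : ℝ) ^ (-2 * s) := by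
    rw [Real.inv_rpow hp0.le, ← Real.rpow_neg hp0.le, neg_sub, sub_eq_add_neg, Real.rpow_add hp0,
      Real.rpow_two, neg_mul]
  have hodd : (p : ℝ) ^ (1 - 2 * s) = p * (p : ℝ) ^ (-2 * s) := by
    rw [sub_eq_add_neg, Real.rpow_add hp0, Real.rpow_one, neg_mul]
  have hone : (p : ℝ)⁻¹ * ((p : ℝ) ^ 2 * (p : ℝ) ^ (-2 * s)) = p * (p : ℝ) ^ (-2 * s) := by
    field_simp
  have htwo : (p : ℝ)⁻¹ ^ 2 * ((p : ℝ) ^ 2 * (p : ℝ) ^ (-2 * s)) = (p : ℝ) ^ (-2 * s) := by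
    field_simp
  rw [zetaFactor, detZeta, normZeta, hpow, hodd, hone, htwo]
  generalize (p : ℝ) ^ (-2 * s) = Q at hQ
  rw [div_eq_mul_inv _ (1 - p * Q)]
  generalize (1 - p * Q)⁻¹ = z
  field_simp
  ring

theorem tsum_heckeSum_sq_eq (hs : heckeBound lam p < s) :
    ∑' n, heckeSum lam p n ^ 2 * ((p : ℝ) ^ (-2 * s)) ^ n =
      (1 - ((p : ℝ)⁻¹ * lam ^ 2 - 1) * (p : ℝ) ^ (1 - 2 * s) +
        ((p : ℝ)⁻¹ * lam ^ 2 - 1) * (p : ℝ) ^ (2 - 4 * s) - (p : ℝ) ^ (3 - 6 * s))⁻¹ *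
      (1 + (p : ℝ) ^ (1 - 2 * s)) := by
  have hp0 := prime_cast_pos (p := p)
  have hpow (n : ℕ) : (p : ℝ) ^ ((n : ℝ) - (2 * n : ℕ) * s) =
      (p : ℝ) ^ n * ((p : ℝ) ^ (-2 * s)) ^ n := by
    rw [← Real.rpow_mul_natCast hp0.le, ← Real.rpow_natCast, ← Real.rpow_add hp0]
    push_cast
    ring_nf
  have h1 : (p : ℝ) ^ (1 - 2 * s) = p * (p : ℝ) ^ (-2 * s) := by simpa using hpow 1
  have h2 : (p : ℝ) ^ (2 - 4 * s) = p ^ 2 * ((p : ℝ) ^ (-2 * s)) ^ 2 := by simpa using hpow 2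
  have h3 : (p : ℝ) ^ (3 - 6 * s) = p ^ 3 * ((p : ℝ) ^ (-2 * s)) ^ 3 := by simpa using hpow 3
  have hseries := tsum_heckeSum_sq_mul (Q := (p : ℝ) ^ (-2 * s)) (by positivity)
    (heckeBound_sq_mul_lt_one hs)
  have hne := right_ne_zero_of_mul (hseries ▸ (by positivity :
    (1 : ℝ) + p * (p : ℝ) ^ (-2 * s) ≠ 0))
  rw [h1, h2, h3, eq_inv_mul_iff_mul_eq₀, ← hseries, mul_comm]
  · field_simp
  · convert hne using 1
    field_simp

end Evaluation

end MatrixPair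

open MatrixPair in
theorem stmt19_general (p : ℕ) [Fact p.Prime] (hp : Odd p) (lam : ℝ)
    (d : ℤ_[p]) (hd : ‖(d : ℚ_[p])‖ = (p : ℝ)⁻¹)
    (β : ℕ → ℝ) (hβ0 : β 0 = 1) (hβ1 : β 1 = (lam - 1) / p)
    (hrec : ∀ k : ℕ, p * β (k + 2) - lam * β (k + 1) + β k = 0)
    (μ : Measure (VV p)) [μ.IsAddHaarMeasure]
    (hμ : μ {v : VV p | (∀ i j, ‖v.1 i j‖ ≤ 1) ∧ (∀ i j, ‖v.2 i j‖ ≤ 1)} = 1) :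
    ∃ s₀ : ℝ, ∀ s : ℝ, s₀ < s →
      IntegrableOn (fs p d β s) (Vd p d) μ ∧
      ∫ v in Vd p d, fs p d β s v ∂μ =
        (1 / 2) * (1 - (p : ℝ)⁻¹) * (1 - (p : ℝ)⁻¹ ^ 2) ^ 3 * (p : ℝ) ^ (1 - s) *
          (1 - (p : ℝ) ^ (1 - 2 * s))⁻¹ *
          (1 - ((p : ℝ)⁻¹ * lam ^ 2 - 1) * (p : ℝ) ^ (1 - 2 * s) +
              ((p : ℝ)⁻¹ * lam ^ 2 - 1) * (p : ℝ) ^ (2 - 4 * s) - (p : ℝ) ^ (3 - 6 * s))⁻¹ *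
          (1 + (p : ℝ) ^ (1 - 2 * s)) := by
  refine ⟨heckeBound lam p, fun s hs => ?_⟩
  have hs1 : 1 < s := one_le_heckeBound.trans_lt hs
  obtain rfl : μ = volume := eq_volume_of_integralPairs hμ
  have hsum := hasSum_zetaCoeff_mul
    (eq_heckeDiff_div_pow (prime_cast_pos (p := p)).ne' hβ0 hβ1 hrec) hs
  obtain ⟨hint, heq⟩ := integrable_and_integral_eq_tsum (aestronglyMeasurable_fs hd volume)
    hsum.summable (by simpa using setLIntegral_Vd_ofReal_mul_fs hp hd hs1 1)
    (by simpa using setLIntegral_Vd_ofReal_mul_fs hp hd hs1 (-1))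
  refine ⟨hint, ?_⟩
  rw [heq, hsum.tsum_eq, ← mul_assoc, zetaFactor_mul_one_sub hs1, tsum_heckeSum_sq_eq hs]
  simp only [← mul_assoc]

/-- the ramified case (`|d|_p = 1/p`): explicit value of the local zeta
integral `∫_{V_d(ℤ_p)} f_s`. -/
theorem stmt19 (p : ℕ) [Fact p.Prime] (hp : Odd p) (q lam : ℝ) (hq : q = p)
    (hlam : |lam| ≤ q + 1)
    (d : ℤ_[p]) (hd : ‖(d : ℚ_[p])‖ = (p : ℝ)⁻¹)
    (β : ℕ → ℝ) (hβ0 : β 0 = 1) (hβ1 : β 1 = (lam - 1) / q)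
    (hrec : ∀ k : ℕ, q * β (k + 2) - lam * β (k + 1) + β k = 0)
    (μ : Measure (VV p)) [μ.IsAddHaarMeasure]
    (hμ : μ {v : VV p | (∀ i j, ‖v.1 i j‖ ≤ 1) ∧ (∀ i j, ‖v.2 i j‖ ≤ 1)} = 1) :
    ∃ s₀ : ℝ, ∀ s : ℝ, s₀ < s →
      IntegrableOn (fs p d β s) (Vd p d) μ ∧
      ∫ v in Vd p d, fs p d β s v ∂μ =
        (1 / 2) * (1 - q⁻¹) * (1 - q⁻¹ ^ 2) ^ 3 * q ^ (1 - s) *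
          (1 - q ^ (1 - 2 * s))⁻¹ *
          (1 - (q⁻¹ * lam ^ 2 - 1) * q ^ (1 - 2 * s) +
              (q⁻¹ * lam ^ 2 - 1) * q ^ (2 - 4 * s) - q ^ (3 - 6 * s))⁻¹ *
          (1 + q ^ (1 - 2 * s)) := by
  subst hq
  exact stmt19_general p hp lam d hd β hβ0 hβ1 hrec μ hμ
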